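/- arXiv:2603.25995 — 3 statements merged into one kernel-verified Lean document; each statement's English description precedes it below -/
import Mathlib

section
/- For every integer N ≥ 1 there exists a constant C = C(N) > 0 such that for all t > 0 and all (x, y, z) ∈ ℝ³: |G₂(t, x, y, z)| ≤ C e^{−ε t} t^{−3/4} (1 + (A t)⁴)^{−1/4} ( 1 + x²/( t^{1/2} (1 + (A t)⁴)^{1/2} ) + (y² + z²)/t^{1/2} )^{−N}. -/
/-!
The exponent of `Ghat2` is a polynomial in the frequency, hence entire, and the integral over `ℝ³`
may be moved to `ℝ³ + i p` for a real vector `p` (`G2_eq_shift`): the integral over `ℝ³ + τ w` is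
an entire function of `τ` (`differentiable_integral_param`), it is constant for real `τ` by
translation invariance, so it is constant (`entire_eq_of_real`). On the shifted contour the factor
`exp (i x · ξ)` becomes `exp (-x · p)` in absolute value.

Write `a + i b` for the sheared complex frequency. Since `κ - 1/16 - ε > 0`, completing the square
gives `Re (v - κ - 4 v²) ≤ -ε - δ |a|⁴ + (144 / δ) |b|⁴` for some `δ > 0` (`re_integrand_le`).
After integration in time both quartic terms are comparable to the same anisotropic expression
`t (1 + (A t)⁴) ξ⁴ + t η⁴ + t ζ⁴` (`re_symbPhase_le`); the shear enters only through the mean of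
`(η + A ξ s)⁴` over `[0, t]` (`integral_affine_pow_four_ge`). With `L = t^{1/4} (1 + (A t)⁴)^{1/4}`
and `l = t^{1/4}`, the shift `p = (± 1 / L, ± 1 / l, ± 1 / l)`, signs chosen from `x, y, z`, costs a
bounded factor and gains `exp (-(|x| / L + |y| / l + |z| / l))`. The remaining quartic Gaussian
integral equals a constant times `1 / (L l²)` (`integral_quartic`), which yields the prefactor
`t^{-3/4} (1 + (A t)⁴)^{-1/4}`, and the exponential beats every power (`exp_neg_le_rpow`).
-/
open MeasureTheory

/-- The symbol `v(s; ξ, η, ζ) = ξ² + (η + A ξ s)² + ζ²`. -/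
noncomputable def vA (A ξ η ζ s : ℝ) : ℝ := ξ ^ 2 + (η + A * ξ * s) ^ 2 + ζ ^ 2

/-- The spectral Green's function `Ĝ₂`. -/
noncomputable def Ghat2 (A κ t ξ η ζ : ℝ) : ℝ :=
  Real.exp (∫ s in (0:ℝ)..t, (vA A ξ η ζ s - κ - 4 * vA A ξ η ζ s ^ 2))

/-- The physical-space kernel `G₂(t, x, y, z) = ∫_{ℝ³} e^{i(xξ+yη+zζ)} Ĝ₂ dξ dη dζ`. -/
noncomputable def G2 (A κ t x y z : ℝ) : ℂ :=
  ∫ q : ℝ × ℝ × ℝ,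
    Complex.exp (Complex.I * ((x * q.1 + y * q.2.1 + z * q.2.2 : ℝ) : ℂ)) *
      (Ghat2 A κ t q.1 q.2.1 q.2.2 : ℂ)

/-! ### The symbol at complex frequencies -/

/-- The exponent of `Ghat2` continued to complex frequencies `(X, Y, Z)`: the antiderivative in
`t`, vanishing at `t = 0`, of `v - κ - 4 v²` with `v = X² + (Y + A X t)² + Z²`, written out as a
polynomial so that it is visibly entire in `(X, Y, Z)`. -/
noncomputable def symbPhase (A κ t : ℝ) (X Y Z : ℂ) : ℂ :=
  (X ^ 2 + Y ^ 2 + Z ^ 2 - κ - 4 * (X ^ 2 + Y ^ 2 + Z ^ 2) ^ 2) * t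
  + (2 * A * X * Y - 16 * A * X * Y * (X ^ 2 + Y ^ 2 + Z ^ 2)) * (t ^ 2 / 2)
  + (A ^ 2 * X ^ 2 - 4 * (4 * A ^ 2 * X ^ 2 * Y ^ 2
      + 2 * A ^ 2 * X ^ 2 * (X ^ 2 + Y ^ 2 + Z ^ 2))) * (t ^ 3 / 3)
  - 16 * A ^ 3 * X ^ 3 * Y * (t ^ 4 / 4)
  - 4 * A ^ 4 * X ^ 4 * (t ^ 5 / 5)

lemma symbPhase_eq_integral (A κ t : ℝ) (X Y Z : ℂ) :
    ∫ s in (0:ℝ)..t, ((X ^ 2 + (Y + A * X * s) ^ 2 + Z ^ 2) - κ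
      - 4 * (X ^ 2 + (Y + A * X * s) ^ 2 + Z ^ 2) ^ 2) = symbPhase A κ t X Y Z := by
  have hpow : ∀ (n : ℕ) (s : ℝ), HasDerivAt (fun s : ℝ => (s : ℂ) ^ n) (n * (s : ℂ) ^ (n - 1)) s := by
    intro n s
    exact (hasDerivAt_pow n (s : ℂ)).comp_ofReal
  have h : ∀ s : ℝ, HasDerivAt (fun s : ℝ => symbPhase A κ s X Y Z)
      ((X ^ 2 + (Y + A * X * s) ^ 2 + Z ^ 2) - κ
      - 4 * (X ^ 2 + (Y + A * X * s) ^ 2 + Z ^ 2) ^ 2) s := by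
    intro s
    have h1 := (hpow 1 s).const_mul (X ^ 2 + Y ^ 2 + Z ^ 2 - κ - 4 * (X ^ 2 + Y ^ 2 + Z ^ 2) ^ 2)
    have h2 := ((hpow 2 s).div_const 2).const_mul
      (2 * A * X * Y - 16 * A * X * Y * (X ^ 2 + Y ^ 2 + Z ^ 2))
    have h3 := ((hpow 3 s).div_const 3).const_mul
      (A ^ 2 * X ^ 2 - 4 * (4 * A ^ 2 * X ^ 2 * Y ^ 2
      + 2 * A ^ 2 * X ^ 2 * (X ^ 2 + Y ^ 2 + Z ^ 2)))
    have h4 := ((hpow 4 s).div_const 4).const_mul (16 * A ^ 3 * X ^ 3 * Y)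
    have h5 := ((hpow 5 s).div_const 5).const_mul (4 * A ^ 4 * X ^ 4)
    have h6 := (((h1.add h2).add h3).sub h4).sub h5
    refine (h6.congr_deriv ?_).congr_of_eventuallyEq (Filter.Eventually.of_forall fun u => ?_)
    · push_cast; ring
    · simp only [symbPhase, Pi.add_apply, Pi.sub_apply, pow_one]
  rw [intervalIntegral.integral_eq_sub_of_hasDerivAt (fun s _ => h s)
    (Continuous.intervalIntegrable (by fun_prop) _ _)]
  simp [symbPhase]

lemma Ghat2_eq (A κ t ξ η ζ : ℝ) :
    (Ghat2 A κ t ξ η ζ : ℂ) = Complex.exp (symbPhase A κ t ξ η ζ) := by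
  rw [← symbPhase_eq_integral, Ghat2, Complex.ofReal_exp, ← intervalIntegral.integral_ofReal]
  simp [vA]

/-- Coercivity of the integrand at a complex frequency `a + i b`, where `a = (a₁, a₂, a₃)` and
`b = (b₁, b₂, b₃)`: the cross term `(a · b)²` is absorbed by Cauchy–Schwarz and Young. -/
lemma re_integrand_le {κ ε δ : ℝ} (hδ : 0 < δ) (hδ1 : δ ≤ 1) (hδκ : δ ≤ κ - 1 / 16 - ε)
    (a₁ a₂ a₃ b₁ b₂ b₃ : ℝ) (v : ℂ)
    (hv : v = (⟨a₁, b₁⟩ : ℂ) ^ 2 + (⟨a₂, b₂⟩ : ℂ) ^ 2 + (⟨a₃, b₃⟩ : ℂ) ^ 2) :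
    (v - κ - 4 * v ^ 2).re ≤ -ε - δ * (a₁ ^ 2 + a₂ ^ 2 + a₃ ^ 2) ^ 2
      + 144 / δ * (b₁ ^ 2 + b₂ ^ 2 + b₃ ^ 2) ^ 2 := by
  obtain ⟨α, hα⟩ : ∃ α, α = a₁ ^ 2 + a₂ ^ 2 + a₃ ^ 2 := ⟨_, rfl⟩
  obtain ⟨β, hβ⟩ : ∃ β, β = b₁ ^ 2 + b₂ ^ 2 + b₃ ^ 2 := ⟨_, rfl⟩
  obtain ⟨m, hm⟩ : ∃ m, m = a₁ * b₁ + a₂ * b₂ + a₃ * b₃ := ⟨_, rfl⟩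
  have hre : (v - κ - 4 * v ^ 2).re = (α - β) - κ - 4 * ((α - β) ^ 2 - 4 * m ^ 2) := by
    subst hv
    simp [pow_two, hα, hβ, hm]
    ring
  have hα0 : 0 ≤ α := by rw [hα]; positivity
  have hβ0 : 0 ≤ β := by rw [hβ]; positivity
  have hcs : m ^ 2 ≤ α * β := by
    rw [hα, hβ, hm]
    nlinarith [sq_nonneg (a₁ * b₂ - a₂ * b₁), sq_nonneg (a₁ * b₃ - a₃ * b₁),
      sq_nonneg (a₂ * b₃ - a₃ * b₂)]
  have hyoung : 24 * (α * β) ≤ δ * α ^ 2 + 144 / δ * β ^ 2 := by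
    have : δ * α ^ 2 + 144 / δ * β ^ 2 - 24 * (α * β) = (δ * α - 12 * β) ^ 2 / δ := by
      field_simp; ring
    have : 0 ≤ (δ * α - 12 * β) ^ 2 / δ := by positivity
    linarith
  -- The maximum of `α - (4 - 2δ) α²` is `1 / (16 - 8δ)`, which is at most `1/16 + δ`.
  have hmax : α - 4 * α ^ 2 + 2 * δ * α ^ 2 ≤ 1 / 16 + δ := by
    have h1 : 0 ≤ (2 * (4 - 2 * δ) * α - 1) ^ 2 := sq_nonneg _
    have h2 : 1 ≤ (16 - 8 * δ) * (1 / 16 + δ) := by nlinarith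
    have h3 : (16 - 8 * δ) * (α - 4 * α ^ 2 + 2 * δ * α ^ 2) ≤ (16 - 8 * δ) * (1 / 16 + δ) := by
      nlinarith
    exact le_of_mul_le_mul_left h3 (by linarith)
  rw [hre, ← hα, ← hβ]
  nlinarith [sq_nonneg β]

/-- The mean over `[0, t]` of the fourth power of an affine function controls the fourth powers of
its initial value `a` and of its increment `b t`, uniformly in `t`. -/
lemma integral_affine_pow_four_ge (a b t : ℝ) (ht : 0 ≤ t) :
    t * (a ^ 4 + (b * t) ^ 4) / 120 ≤ ∫ s in (0:ℝ)..t, (a + b * s) ^ 4 := by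
  have hd : ∀ s : ℝ, HasDerivAt (fun s : ℝ => a ^ 4 * s + 2 * a ^ 3 * b * s ^ 2
      + 2 * a ^ 2 * b ^ 2 * s ^ 3 + a * b ^ 3 * s ^ 4 + b ^ 4 / 5 * s ^ 5) ((a + b * s) ^ 4) s := by
    intro s
    have := (((((hasDerivAt_id s).const_mul (a ^ 4)).add
      ((hasDerivAt_pow 2 s).const_mul (2 * a ^ 3 * b))).add
      ((hasDerivAt_pow 3 s).const_mul (2 * a ^ 2 * b ^ 2))).add
      ((hasDerivAt_pow 4 s).const_mul (a * b ^ 3))).add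
      ((hasDerivAt_pow 5 s).const_mul (b ^ 4 / 5))
    refine this.congr_deriv ?_
    push_cast; ring
  rw [intervalIntegral.integral_eq_sub_of_hasDerivAt (fun s _ => hd s)
    (Continuous.intervalIntegrable (by fun_prop) _ _)]
  obtain ⟨r, hr⟩ : ∃ r, r = b * t := ⟨_, rfl⟩
  have hkey : (a ^ 4 + r ^ 4) / 120 ≤
      a ^ 4 + 2 * a ^ 3 * r + 2 * a ^ 2 * r ^ 2 + a * r ^ 3 + r ^ 4 / 5 := by
    -- In terms of the midpoint value `m` the mean is `m⁴ + m² r² / 2 + r⁴ / 80`.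
    obtain ⟨m, rfl⟩ : ∃ m, a = m - r / 2 := ⟨a + r / 2, by ring⟩
    have h4 : (m - r / 2) ^ 4 ≤ 8 * m ^ 4 + r ^ 4 / 2 := by
      nlinarith [sq_nonneg (m ^ 2 - (r / 2) ^ 2), sq_nonneg (m + r / 2), sq_nonneg (m - r / 2),
        sq_nonneg ((m + r / 2) ^ 2), mul_nonneg (sq_nonneg (m + r / 2)) (sq_nonneg (m - r / 2)),
        mul_nonneg (sq_nonneg (m + r / 2)) (sq_nonneg m),
        mul_nonneg (sq_nonneg (m + r / 2)) (sq_nonneg r)]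
    have e : (m - r / 2) ^ 4 + 2 * (m - r / 2) ^ 3 * r + 2 * (m - r / 2) ^ 2 * r ^ 2
        + (m - r / 2) * r ^ 3 + r ^ 4 / 5 = m ^ 4 + m ^ 2 * r ^ 2 / 2 + r ^ 4 / 80 := by ring
    rw [e]
    have : 0 ≤ m ^ 2 * r ^ 2 := by positivity
    have : 0 ≤ m ^ 4 := by positivity
    linarith
  have := mul_le_mul_of_nonneg_left hkey ht
  rw [hr] at this
  linear_combination this

lemma four_pow_add_le (u v : ℝ) : (u + v) ^ 4 ≤ 8 * (u ^ 4 + v ^ 4) := by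
  have h1 : (u + v) ^ 2 ≤ 2 * (u ^ 2 + v ^ 2) := add_sq_le
  have h2 : (u ^ 2 + v ^ 2) ^ 2 ≤ 2 * ((u ^ 2) ^ 2 + (v ^ 2) ^ 2) := add_sq_le
  calc (u + v) ^ 4 = ((u + v) ^ 2) ^ 2 := by ring
    _ ≤ (2 * (u ^ 2 + v ^ 2)) ^ 2 := by gcongr
    _ ≤ _ := by linarith

/-- Upper bound for the real part of the phase: decay in the real part of the frequency, bounded
loss in the imaginary part, both measured in the anisotropic scale
`t (1 + (A t)⁴) |X|⁴ + t |Y|⁴ + t |Z|⁴`. -/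
lemma re_symbPhase_le {A κ ε δ t : ℝ} (hA : 0 < A) (hδ : 0 < δ) (hδ1 : δ ≤ 1)
    (hδκ : δ ≤ κ - 1 / 16 - ε) (ht : 0 < t) (X Y Z : ℂ) :
    (symbPhase A κ t X Y Z).re ≤ -ε * t
      - δ / 120 * (t * (1 + (A * t) ^ 4) * X.re ^ 4 + t * Y.re ^ 4 + t * Z.re ^ 4)
      + 3456 / δ * (t * (1 + (A * t) ^ 4) * X.im ^ 4 + t * Y.im ^ 4 + t * Z.im ^ 4) := by
  rw [← symbPhase_eq_integral]
  have hre : (∫ s in (0:ℝ)..t, ((X ^ 2 + (Y + A * X * s) ^ 2 + Z ^ 2) - κ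
      - 4 * (X ^ 2 + (Y + A * X * s) ^ 2 + Z ^ 2) ^ 2)).re =
      ∫ s in (0:ℝ)..t, ((X ^ 2 + (Y + A * X * s) ^ 2 + Z ^ 2) - κ
      - 4 * (X ^ 2 + (Y + A * X * s) ^ 2 + Z ^ 2) ^ 2).re := by
    have := Complex.reCLM.intervalIntegral_comp_comm (μ := volume) (a := 0) (b := t)
      (f := fun s : ℝ => ((X ^ 2 + (Y + A * X * s) ^ 2 + Z ^ 2) - κ
      - 4 * (X ^ 2 + (Y + A * X * s) ^ 2 + Z ^ 2) ^ 2))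
      (Continuous.intervalIntegrable (by fun_prop) _ _)
    exact this.symm
  rw [hre]
  obtain ⟨β, hβ⟩ : ∃ β, β = (1 + (A * t) ^ 4) * X.im ^ 4 + Y.im ^ 4 + Z.im ^ 4 := ⟨_, rfl⟩
  have hpt : ∀ s ∈ Set.Icc 0 t, ((X ^ 2 + (Y + A * X * s) ^ 2 + Z ^ 2) - κ
      - 4 * (X ^ 2 + (Y + A * X * s) ^ 2 + Z ^ 2) ^ 2).re ≤
      (-ε - δ * (X.re ^ 4 + Z.re ^ 4) + 144 / δ * (24 * β))
        - δ * (Y.re + A * X.re * s) ^ 4 := by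
    intro s hs
    have h := re_integrand_le hδ hδ1 hδκ X.re (Y.re + A * X.re * s) Z.re
      X.im (Y.im + A * X.im * s) Z.im (X ^ 2 + (Y + A * X * s) ^ 2 + Z ^ 2) (by
        congr
        apply Complex.ext <;> simp)
    refine h.trans ?_
    have hα : X.re ^ 4 + Z.re ^ 4 + (Y.re + A * X.re * s) ^ 4
        ≤ (X.re ^ 2 + (Y.re + A * X.re * s) ^ 2 + Z.re ^ 2) ^ 2 := by
      have h1 : 0 ≤ X.re ^ 2 * (Y.re + A * X.re * s) ^ 2 := by positivity
      have h2 : 0 ≤ X.re ^ 2 * Z.re ^ 2 := by positivity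
      have h3 : 0 ≤ (Y.re + A * X.re * s) ^ 2 * Z.re ^ 2 := by positivity
      linarith
    have hβ' : (X.im ^ 2 + (Y.im + A * X.im * s) ^ 2 + Z.im ^ 2) ^ 2 ≤ 24 * β := by
      have h1 := four_pow_add_le Y.im (A * X.im * s)
      have h2 : (A * X.im * s) ^ 4 ≤ (A * t) ^ 4 * X.im ^ 4 := by
        have : (A * s) ^ 4 ≤ (A * t) ^ 4 := by
          have := hs.1
          have := hs.2
          gcongr
        calc (A * X.im * s) ^ 4 = (A * s) ^ 4 * X.im ^ 4 := by ring
          _ ≤ _ := by gcongr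
      have h3 : (X.im ^ 2 + (Y.im + A * X.im * s) ^ 2 + Z.im ^ 2) ^ 2 ≤
          3 * (X.im ^ 4 + (Y.im + A * X.im * s) ^ 4 + Z.im ^ 4) := by
        nlinarith [sq_nonneg (X.im ^ 2 - Z.im ^ 2),
          sq_nonneg (X.im ^ 2 - (Y.im + A * X.im * s) ^ 2),
          sq_nonneg ((Y.im + A * X.im * s) ^ 2 - Z.im ^ 2)]
      have : 0 ≤ X.im ^ 4 := by positivity
      have : 0 ≤ Z.im ^ 4 := by positivity
      rw [hβ]
      linarith
    have h1 := mul_le_mul_of_nonneg_left hα hδ.le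
    have h2 := mul_le_mul_of_nonneg_left hβ' (by positivity : 0 ≤ 144 / δ)
    linarith
  have hint := intervalIntegral.integral_mono_on (μ := volume) ht.le
    (Continuous.intervalIntegrable (by fun_prop) _ _)
    (Continuous.intervalIntegrable (by fun_prop) _ _) hpt
  refine hint.trans ?_
  rw [intervalIntegral.integral_sub (by simp) (Continuous.intervalIntegrable (by fun_prop) _ _),
    intervalIntegral.integral_const, intervalIntegral.integral_const_mul, smul_eq_mul]
  have h4 := integral_affine_pow_four_ge Y.re (A * X.re) t ht.le
  have h5 := mul_le_mul_of_nonneg_left h4 hδ.le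
  have h6 : 0 ≤ δ * t * (X.re ^ 4 + Z.re ^ 4) := by positivity
  have e : 144 / δ * (24 * β) = 3456 / δ * β := by ring
  rw [e, hβ]
  have h7 : δ * (t * (Y.re ^ 4 + (A * X.re * t) ^ 4) / 120) =
    δ / 120 * (t * (A * t) ^ 4 * X.re ^ 4 + t * Y.re ^ 4) := by ring
  linarith

/-! ### Quartic Gaussians and the contour shift -/

lemma integrable_exp_neg_pow_four {c : ℝ} (hc : 0 < c) :
    Integrable (fun u : ℝ => Real.exp (-c * u ^ 4)) := by
  have h := (integrable_exp_neg_mul_sq (b := 2 * c) (by positivity)).const_mul (Real.exp c)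
  refine h.mono' (by fun_prop) (Filter.Eventually.of_forall fun u => ?_)
  rw [Real.norm_eq_abs, Real.abs_exp, ← Real.exp_add]
  apply Real.exp_le_exp.mpr
  nlinarith [mul_nonneg hc.le (sq_nonneg (u ^ 2 - 1))]

lemma integrable_quartic {c L l : ℝ} (hc : 0 < c) (hL : 0 < L) (hl : 0 < l) :
    Integrable (fun q : ℝ × ℝ × ℝ => Real.exp (-c * (L * q.1) ^ 4) *
      (Real.exp (-c * (l * q.2.1) ^ 4) * Real.exp (-c * (l * q.2.2) ^ 4))) := by
  have h1 := (integrable_exp_neg_pow_four hc).comp_mul_left' hL.ne'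
  have h2 := (integrable_exp_neg_pow_four hc).comp_mul_left' hl.ne'
  exact h1.mul_prod (h2.mul_prod h2)

lemma integral_quartic {c L l : ℝ} (hL : 0 < L) (hl : 0 < l) :
    ∫ q : ℝ × ℝ × ℝ, Real.exp (-c * (L * q.1) ^ 4) *
      (Real.exp (-c * (l * q.2.1) ^ 4) * Real.exp (-c * (l * q.2.2) ^ 4)) =
    (∫ u : ℝ, Real.exp (-c * u ^ 4)) ^ 3 * (L⁻¹ * l⁻¹ ^ 2) := by
  have h1 := Measure.integral_comp_mul_left (fun u : ℝ => Real.exp (-c * u ^ 4)) L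
  have h2 := Measure.integral_comp_mul_left (fun u : ℝ => Real.exp (-c * u ^ 4)) l
  rw [abs_of_pos (inv_pos.mpr hL), smul_eq_mul] at h1
  rw [abs_of_pos (inv_pos.mpr hl), smul_eq_mul] at h2
  have h3 := integral_prod_mul (μ := (volume : Measure ℝ)) (ν := (volume : Measure ℝ))
    (fun u : ℝ => Real.exp (-c * (l * u) ^ 4)) (fun u : ℝ => Real.exp (-c * (l * u) ^ 4))
  have h4 := integral_prod_mul (μ := (volume : Measure ℝ)) (ν := (volume : Measure (ℝ × ℝ)))
    (fun u : ℝ => Real.exp (-c * (L * u) ^ 4)) (fun p : ℝ × ℝ =>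
      Real.exp (-c * (l * p.1) ^ 4) * Real.exp (-c * (l * p.2) ^ 4))
  rw [Measure.volume_eq_prod, Measure.volume_eq_prod] at *
  rw [h4, h3, h1, h2]
  ring

/-- An integral depending holomorphically on a complex parameter, with integrable domination on
bounded parameter sets, is entire; the derivative is dominated through Cauchy's estimate. -/
lemma differentiable_integral_param (H : ℂ → ℝ × ℝ × ℝ → ℂ)
    (hd : ∀ q, Differentiable ℂ (fun τ => H τ q)) (hc : ∀ τ, Continuous (H τ))
    (hB : ∀ R : ℝ, ∃ B : ℝ × ℝ × ℝ → ℝ, Integrable B ∧ ∀ τ q, ‖τ‖ ≤ R → ‖H τ q‖ ≤ B q) :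
    Differentiable ℂ (fun τ => ∫ q, H τ q) := by
  intro τ₀
  obtain ⟨B, hBi, hBb⟩ := hB (‖τ₀‖ + 2)
  have hmeas : AEStronglyMeasurable (fun q => deriv (fun τ => H τ q) τ₀) volume := by
    -- The derivative in the parameter is a pointwise limit of continuous difference quotients.
    refine aestronglyMeasurable_of_tendsto_ae (u := Filter.atTop)
      (f := fun (n : ℕ) q => ((1 / ((n : ℝ) + 1) : ℝ) : ℂ)⁻¹ •
        (H (τ₀ + ((1 / ((n : ℝ) + 1) : ℝ) : ℂ)) q - H τ₀ q)) ?_ ?_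
    · intro n
      exact (((hc _).sub (hc _)).const_smul (_ : ℂ)).aestronglyMeasurable
    · refine Filter.Eventually.of_forall fun q => ?_
      have h1 := (hasDerivAt_iff_tendsto_slope_zero.mp (hd q τ₀).hasDerivAt)
      refine h1.comp (tendsto_nhdsWithin_iff.mpr ⟨?_, ?_⟩)
      · have := tendsto_one_div_add_atTop_nhds_zero_nat (𝕜 := ℝ)
        have h2 := (Complex.continuous_ofReal.tendsto 0).comp this
        simpa [Function.comp_def] using h2
      · refine Filter.Eventually.of_forall fun n => ?_
        have : (0:ℝ) < 1 / ((n : ℝ) + 1) := by positivity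
        simpa using Complex.ofReal_ne_zero.mpr this.ne'
  refine (hasDerivAt_integral_of_dominated_loc_of_deriv_le (F := H)
    (F' := fun τ q => deriv (fun τ => H τ q) τ) (bound := B) (s := Metric.ball τ₀ 1)
    (Metric.ball_mem_nhds _ one_pos)
    (Filter.Eventually.of_forall fun τ => (hc τ).aestronglyMeasurable)
    (hBi.mono' (hc τ₀).aestronglyMeasurable
      (Filter.Eventually.of_forall fun q => hBb _ _ (by linarith)))
    hmeas (Filter.Eventually.of_forall fun q τ hτ => ?_) hBi
    (Filter.Eventually.of_forall fun q τ _ => (hd q τ).hasDerivAt)).2.differentiableAt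
  have h := Complex.norm_deriv_le_of_forall_mem_sphere_norm_le (c := τ) (R := 1) (C := B q)
    (f := fun τ => H τ q) one_pos (hd q).diffContOnCl (fun z hz => hBb _ _ ?_)
  · simpa using h
  · have h1 : ‖z - τ‖ = 1 := by simpa [dist_eq_norm] using hz
    have h2 : ‖τ - τ₀‖ < 1 := by simpa [dist_eq_norm] using hτ
    calc ‖z‖ = ‖(z - τ) + (τ - τ₀) + τ₀‖ := by ring_nf
      _ ≤ ‖z - τ‖ + ‖τ - τ₀‖ + ‖τ₀‖ := norm_add₃_le
      _ ≤ _ := by linarith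

/-- Identity theorem: an entire function constant on the real axis is constant. -/
lemma entire_eq_of_real {h : ℂ → ℂ} (hh : Differentiable ℂ h) (hr : ∀ r : ℝ, h r = h 0) (τ : ℂ) :
    h τ = h 0 := by
  have h1 : AnalyticOnNhd ℂ h Set.univ := fun z _ => hh.analyticAt z
  have h2 : AnalyticOnNhd ℂ (fun _ : ℂ => h 0) Set.univ := fun z _ => analyticAt_const
  have hf : ∃ᶠ z in nhdsWithin (0:ℂ) {0}ᶜ, h z = h 0 := by
    have ht : Filter.Tendsto (fun n : ℕ => ((1 / ((n : ℝ) + 1) : ℝ) : ℂ)) Filter.atTop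
        (nhdsWithin (0:ℂ) {0}ᶜ) := by
      refine tendsto_nhdsWithin_iff.mpr ⟨?_, ?_⟩
      · have := tendsto_one_div_add_atTop_nhds_zero_nat (𝕜 := ℝ)
        have h2 := (Complex.continuous_ofReal.tendsto 0).comp this
        simpa [Function.comp_def] using h2
      · refine Filter.Eventually.of_forall fun n => ?_
        have : (0:ℝ) < 1 / ((n : ℝ) + 1) := by positivity
        simpa using Complex.ofReal_ne_zero.mpr this.ne'
    exact ht.frequently (Filter.Frequently.of_forall fun n => hr _)
  exact congrFun (h1.eq_of_frequently_eq h2 hf) τ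

/-! ### Exponential bound for the kernel -/

/-- The integrand of the kernel at the complex frequency `q + τ w`, for a real direction `w`. -/
noncomputable def shiftedIntegrand (A κ t x y z w₁ w₂ w₃ : ℝ) (τ : ℂ) (q : ℝ × ℝ × ℝ) : ℂ :=
  Complex.exp (Complex.I * (x * (q.1 + τ * w₁) + y * (q.2.1 + τ * w₂) + z * (q.2.2 + τ * w₃))
    + symbPhase A κ t (q.1 + τ * w₁) (q.2.1 + τ * w₂) (q.2.2 + τ * w₃))

lemma norm_shiftedIntegrand_le {A κ ε δ t L l : ℝ} (hA : 0 < A) (hδ : 0 < δ) (hδ1 : δ ≤ 1)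
    (hδκ : δ ≤ κ - 1 / 16 - ε) (ht : 0 < t) (hL : 0 < L) (hl : 0 < l)
    (hL4 : L ^ 4 = t * (1 + (A * t) ^ 4)) (hl4 : l ^ 4 = t)
    {σ₁ σ₂ σ₃ : ℝ} (h₁ : |σ₁| ≤ 1) (h₂ : |σ₂| ≤ 1) (h₃ : |σ₃| ≤ 1)
    (x y z : ℝ) (τ : ℂ) (q : ℝ × ℝ × ℝ) :
    ‖shiftedIntegrand A κ t x y z (σ₁ / L) (σ₂ / l) (σ₃ / l) τ q‖ ≤
      Real.exp (-τ.im * (x * σ₁ / L + y * σ₂ / l + z * σ₃ / l) - ε * t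
        - δ / 120 * ((L * q.1 + τ.re * σ₁) ^ 4 + (l * q.2.1 + τ.re * σ₂) ^ 4
          + (l * q.2.2 + τ.re * σ₃) ^ 4) + 3456 / δ * (3 * τ.im ^ 4)) := by
  rw [shiftedIntegrand, Complex.norm_exp]
  apply Real.exp_le_exp.mpr
  have h := re_symbPhase_le hA hδ hδ1 hδκ ht (q.1 + τ * (σ₁ / L : ℝ))
    (q.2.1 + τ * (σ₂ / l : ℝ)) (q.2.2 + τ * (σ₃ / l : ℝ))
  have er : ∀ (u σ M : ℝ), 0 < M → M ^ 4 * ((u : ℂ) + τ * (σ / M : ℝ)).re ^ 4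
      = (M * u + τ.re * σ) ^ 4 := by
    intro u σ M hM
    rw [← mul_pow]
    congr 1
    simp only [Complex.add_re, Complex.ofReal_re, Complex.re_mul_ofReal]
    field_simp
  have ei : ∀ (u σ M : ℝ), 0 < M → |σ| ≤ 1 → M ^ 4 * ((u : ℂ) + τ * (σ / M : ℝ)).im ^ 4
      ≤ τ.im ^ 4 := by
    intro u σ M hM hσ
    have h1 : M ^ 4 * ((u : ℂ) + τ * (σ / M : ℝ)).im ^ 4 = τ.im ^ 4 * σ ^ 4 := by
      rw [← mul_pow, ← mul_pow]
      congr 1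
      simp only [Complex.add_im, Complex.ofReal_im, Complex.im_mul_ofReal]
      field_simp
      ring
    have h2 : σ ^ 4 ≤ 1 := by
      rw [← Even.pow_abs (by decide : Even 4)]
      exact pow_le_one₀ (abs_nonneg _) hσ
    rw [h1]
    exact mul_le_of_le_one_right (by positivity) h2
  rw [← hL4, er _ _ _ hL] at h
  rw [Complex.add_re]
  have hx : (Complex.I * (x * (q.1 + τ * (σ₁ / L : ℝ)) + y * (q.2.1 + τ * (σ₂ / l : ℝ))
      + z * (q.2.2 + τ * (σ₃ / l : ℝ)))).re
      = -τ.im * (x * σ₁ / L + y * σ₂ / l + z * σ₃ / l) := by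
    simp only [Complex.I_mul_re, Complex.add_im, Complex.im_ofReal_mul, Complex.ofReal_im,
      Complex.im_mul_ofReal]
    ring
  have r2 := er q.2.1 σ₂ l hl
  have r3 := er q.2.2 σ₃ l hl
  have i1 := ei q.1 σ₁ L hL h₁
  have i2 := ei q.2.1 σ₂ l hl h₂
  have i3 := ei q.2.2 σ₃ l hl h₃
  rw [hl4] at r2 r3 i2 i3
  rw [r2, r3] at h
  have hs := mul_le_mul_of_nonneg_left (add_le_add (add_le_add i1 i2) i3)
    (by positivity : 0 ≤ 3456 / δ)
  rw [hx]
  linarith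

lemma shift_pow_four_ge (R u r σ : ℝ) (hr : |r| ≤ R) (hσ : |σ| ≤ 1) :
    u ^ 4 / 8 - R ^ 4 ≤ (u + r * σ) ^ 4 := by
  have h1 := four_pow_add_le (u + r * σ) (-(r * σ))
  have h2 : (r * σ) ^ 4 ≤ R ^ 4 := by
    rw [← Even.pow_abs (by decide : Even 4), abs_mul]
    have : |r| * |σ| ≤ R := by nlinarith [abs_nonneg r, abs_nonneg σ]
    gcongr
  have e : (-(r * σ)) ^ 4 = (r * σ) ^ 4 := by ring
  rw [e, add_neg_cancel_right] at h1
  linarith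

/-- Moving the contour of integration to `ℝ³ + i (σ₁ / L, σ₂ / l, σ₃ / l)` leaves the kernel
unchanged. -/
lemma G2_eq_shift {A κ ε δ t L l : ℝ} (hA : 0 < A) (hε : 0 < ε) (hδ : 0 < δ) (hδ1 : δ ≤ 1)
    (hδκ : δ ≤ κ - 1 / 16 - ε) (ht : 0 < t) (hL : 0 < L) (hl : 0 < l)
    (hL4 : L ^ 4 = t * (1 + (A * t) ^ 4)) (hl4 : l ^ 4 = t)
    {σ₁ σ₂ σ₃ : ℝ} (h₁ : |σ₁| ≤ 1) (h₂ : |σ₂| ≤ 1) (h₃ : |σ₃| ≤ 1) (x y z : ℝ) :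
    G2 A κ t x y z =
      ∫ q, shiftedIntegrand A κ t x y z (σ₁ / L) (σ₂ / l) (σ₃ / l) Complex.I q := by
  obtain ⟨H, hH⟩ : ∃ H, H = shiftedIntegrand A κ t x y z (σ₁ / L) (σ₂ / l) (σ₃ / l) := ⟨_, rfl⟩
  have hdiff : Differentiable ℂ (fun τ => ∫ q, H τ q) := by
    refine differentiable_integral_param H ?_ ?_ ?_
    · intro q
      simp only [hH, shiftedIntegrand, symbPhase]
      fun_prop
    · intro τ
      simp only [hH]
      unfold shiftedIntegrand symbPhase
      fun_prop
    · intro R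
      obtain ⟨S, hS⟩ : ∃ S, S = x * σ₁ / L + y * σ₂ / l + z * σ₃ / l := ⟨_, rfl⟩
      refine ⟨_, (integrable_quartic (c := δ / 120 / 8) (by positivity) hL hl).const_mul
        (Real.exp (R * |S| + δ / 120 * (3 * R ^ 4) + 3456 / δ * (3 * R ^ 4))), ?_⟩
      intro τ q hτ
      rw [hH]
      refine (norm_shiftedIntegrand_le hA hδ hδ1 hδκ ht hL hl hL4 hl4 h₁ h₂ h₃ x y z τ q).trans ?_
      rw [← Real.exp_add, ← Real.exp_add, ← Real.exp_add]
      apply Real.exp_le_exp.mpr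
      have hre := (Complex.abs_re_le_norm τ).trans hτ
      have him := (Complex.abs_im_le_norm τ).trans hτ
      have k1 := shift_pow_four_ge R (L * q.1) _ _ hre h₁
      have k2 := shift_pow_four_ge R (l * q.2.1) _ _ hre h₂
      have k3 := shift_pow_four_ge R (l * q.2.2) _ _ hre h₃
      have k := mul_le_mul_of_nonneg_left (add_le_add (add_le_add k1 k2) k3)
        (by positivity : 0 ≤ δ / 120)
      have k4 : τ.im ^ 4 ≤ R ^ 4 := by
        rw [← Even.pow_abs (by decide : Even 4)]
        gcongr
      have k5 := mul_le_mul_of_nonneg_left k4 (by positivity : 0 ≤ 3456 / δ)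
      have k6 : -τ.im * S ≤ R * |S| := by
        calc -τ.im * S ≤ |-τ.im * S| := le_abs_self _
          _ = |τ.im| * |S| := by rw [abs_mul, abs_neg]
          _ ≤ _ := by gcongr
      have k7 : 0 < ε * t := by positivity
      rw [← hS]
      linarith
  have hreal : ∀ r : ℝ, ∫ q, H r q = ∫ q, H 0 q := by
    intro r
    have : (volume : Measure (ℝ × ℝ × ℝ)).IsAddLeftInvariant :=
      Measure.prod.instIsAddLeftInvariant
    have h := integral_add_left_eq_self
      (μ := (volume : Measure (ℝ × ℝ × ℝ))) (H 0)
      (r * (σ₁ / L), r * (σ₂ / l), r * (σ₃ / l))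
    refine Eq.trans ?_ h
    refine integral_congr_ae (Filter.Eventually.of_forall fun q => ?_)
    simp [hH, shiftedIntegrand, add_comm]
  have hI := entire_eq_of_real hdiff hreal Complex.I
  rw [← hH]
  rw [hI, G2]
  congr 1
  funext q
  rw [Ghat2_eq, ← Complex.exp_add]
  simp [hH, shiftedIntegrand]

lemma norm_G2_le {A κ ε : ℝ} (hA : 0 < A) (hε : 0 < ε) (hκ : 1 / 16 + ε < κ) :
    ∃ C : ℝ, 0 < C ∧ ∀ t x y z L l : ℝ, 0 < t → 0 < L → 0 < l →
      L ^ 4 = t * (1 + (A * t) ^ 4) → l ^ 4 = t →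
      ‖G2 A κ t x y z‖ ≤ C * Real.exp (-ε * t) * (L⁻¹ * l⁻¹ ^ 2) *
        Real.exp (-(|x| / L + |y| / l + |z| / l)) := by
  obtain ⟨δ, hδ, hδ1, hδκ⟩ : ∃ δ : ℝ, 0 < δ ∧ δ ≤ 1 ∧ δ ≤ κ - 1 / 16 - ε :=
    ⟨min 1 (κ - 1 / 16 - ε), lt_min one_pos (by linarith), min_le_left _ _, min_le_right _ _⟩
  refine ⟨Real.exp (3456 / δ * 3) * ((∫ u : ℝ, Real.exp (-(δ / 120) * u ^ 4)) ^ 3 + 1), ?_, ?_⟩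
  · have : 0 ≤ ∫ u : ℝ, Real.exp (-(δ / 120) * u ^ 4) := integral_nonneg fun u => by positivity
    positivity
  intro t x y z L l ht hL hl hL4 hl4
  have hsgn : ∀ u : ℝ, ∃ σ : ℝ, |σ| ≤ 1 ∧ u * σ = |u| := by
    intro u
    rcases le_total 0 u with hu | hu
    · exact ⟨1, by simp, by simp [abs_of_nonneg hu]⟩
    · exact ⟨-1, by simp, by simp [abs_of_nonpos hu]⟩
  obtain ⟨σ₁, h₁, e₁⟩ := hsgn x
  obtain ⟨σ₂, h₂, e₂⟩ := hsgn y
  obtain ⟨σ₃, h₃, e₃⟩ := hsgn z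
  rw [G2_eq_shift hA hε hδ hδ1 hδκ ht hL hl hL4 hl4 h₁ h₂ h₃]
  have hb := norm_integral_le_of_norm_le
    ((integrable_quartic (c := δ / 120) (by positivity) hL hl).const_mul
      (Real.exp (3456 / δ * 3) * Real.exp (-ε * t) *
        Real.exp (-(|x| / L + |y| / l + |z| / l))))
    (f := shiftedIntegrand A κ t x y z (σ₁ / L) (σ₂ / l) (σ₃ / l) Complex.I)
    (Filter.Eventually.of_forall fun q => by
      refine (norm_shiftedIntegrand_le hA hδ hδ1 hδκ ht hL hl hL4 hl4
        h₁ h₂ h₃ x y z Complex.I q).trans (le_of_eq ?_)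
      simp only [← Real.exp_add]
      rw [e₁, e₂, e₃]
      congr 1
      simp only [Complex.I_re, Complex.I_im]
      ring)
  refine hb.trans ?_
  rw [integral_const_mul, integral_quartic hL hl]
  have hp : 0 ≤ Real.exp (3456 / δ * 3) * Real.exp (-ε * t) *
        Real.exp (-(|x| / L + |y| / l + |z| / l)) * (L⁻¹ * l⁻¹ ^ 2) := by positivity
  linarith

/-- Exponential decay dominates the inverse powers of `1 + a² + b² + c²`. -/
lemma exp_neg_le_rpow (N : ℕ) (a b c : ℝ) (ha : 0 ≤ a) (hb : 0 ≤ b) (hc : 0 ≤ c) :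
    Real.exp (-(a + b + c)) ≤
      (Real.exp 1 * (2 * N).factorial) * (1 + a ^ 2 + (b ^ 2 + c ^ 2)) ^ (-(N : ℝ)) := by
  have h1 := Real.pow_div_factorial_le_exp (1 + (a + b + c)) (by positivity) (2 * N)
  have h2 : (1 + a ^ 2 + (b ^ 2 + c ^ 2)) ^ N ≤ (1 + (a + b + c)) ^ (2 * N) := by
    rw [pow_mul]
    have : 0 ≤ a * b := by positivity
    have : 0 ≤ a * c := by positivity
    have : 0 ≤ b * c := by positivity
    gcongr
    nlinarith
  have hp : 0 < (1 + a ^ 2 + (b ^ 2 + c ^ 2)) ^ N := by positivity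
  rw [Real.rpow_neg (by positivity), Real.rpow_natCast, ← div_eq_mul_inv, le_div_iff₀ hp,
    Real.exp_neg, inv_mul_le_iff₀ (Real.exp_pos _)]
  rw [div_le_iff₀ (by positivity), Real.exp_add] at h1
  linarith

/-- For every integer `N ≥ 1` there is `C = C(N) > 0` such that for all
`t > 0` and `(x, y, z) ∈ ℝ³`:
`|G₂(t,x,y,z)| ≤ C e^{-εt} t^{-3/4} (1+(At)⁴)^{-1/4}
  (1 + x²/(t^{1/2}(1+(At)⁴)^{1/2}) + (y²+z²)/t^{1/2})^{-N}`. -/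
theorem stmt_10 (A κ ε : ℝ) (hA : 0 < A) (hκ0 : 0 < κ) (hε : 0 < ε)
    (hκ : 1 / 16 + ε < κ) :
    ∀ N : ℕ, 1 ≤ N → ∃ C : ℝ, 0 < C ∧ ∀ t x y z : ℝ, 0 < t →
      ‖G2 A κ t x y z‖ ≤
        C * Real.exp (-ε * t) * t ^ (-(3:ℝ)/4) * (1 + (A * t) ^ 4) ^ (-(1:ℝ)/4) *
          (1 + x ^ 2 / (t ^ ((1:ℝ)/2) * (1 + (A * t) ^ 4) ^ ((1:ℝ)/2)) +
            (y ^ 2 + z ^ 2) / t ^ ((1:ℝ)/2)) ^ (-(N : ℝ)) := by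
  intro N _
  obtain ⟨C, hC, hG⟩ := norm_G2_le hA hε hκ
  refine ⟨C * (Real.exp 1 * (2 * N).factorial), by positivity, ?_⟩
  intro t x y z ht
  obtain ⟨P, hP⟩ : ∃ P, P = 1 + (A * t) ^ 4 := ⟨_, rfl⟩
  have hP0 : 0 < P := by rw [hP]; positivity
  have hr4 : ∀ u : ℝ, 0 < u → (u ^ ((1:ℝ) / 4)) ^ 4 = u := by
    intro u hu
    rw [← Real.rpow_natCast, ← Real.rpow_mul hu.le]
    norm_num
  have hr2 : ∀ u : ℝ, 0 < u → (u ^ ((1:ℝ) / 4)) ^ 2 = u ^ ((1:ℝ) / 2) := by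
    intro u hu
    rw [← Real.rpow_natCast, ← Real.rpow_mul hu.le]
    norm_num
  have hl : 0 < t ^ ((1:ℝ) / 4) := by positivity
  have hL : 0 < t ^ ((1:ℝ) / 4) * P ^ ((1:ℝ) / 4) := by positivity
  have h := hG t x y z (t ^ ((1:ℝ) / 4) * P ^ ((1:ℝ) / 4)) (t ^ ((1:ℝ) / 4)) ht hL hl
    (by rw [mul_pow, hr4 t ht, hr4 P hP0, hP]) (hr4 t ht)
  have hN := exp_neg_le_rpow N (|x| / (t ^ ((1:ℝ) / 4) * P ^ ((1:ℝ) / 4)))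
    (|y| / t ^ ((1:ℝ) / 4)) (|z| / t ^ ((1:ℝ) / 4)) (by positivity) (by positivity) (by positivity)
  rw [div_pow, div_pow, div_pow, sq_abs, sq_abs, sq_abs, mul_pow, hr2 t ht, hr2 P hP0,
    ← add_div] at hN
  have hJ : (t ^ ((1:ℝ) / 4) * P ^ ((1:ℝ) / 4))⁻¹ * (t ^ ((1:ℝ) / 4))⁻¹ ^ 2
      = t ^ (-(3:ℝ) / 4) * P ^ (-(1:ℝ) / 4) := by
    have e1 : t ^ (-(3:ℝ) / 4) = ((t ^ ((1:ℝ) / 4)) ^ 3)⁻¹ := by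
      rw [← Real.rpow_natCast, ← Real.rpow_mul ht.le, ← Real.rpow_neg ht.le]
      norm_num
    have e2 : P ^ (-(1:ℝ) / 4) = (P ^ ((1:ℝ) / 4))⁻¹ := by
      rw [← Real.rpow_neg hP0.le]
      norm_num
    rw [e1, e2]
    field_simp
  rw [hJ] at h
  rw [← hP]
  calc ‖G2 A κ t x y z‖ ≤ _ := h
    _ ≤ _ := mul_le_mul_of_nonneg_left hN (by positivity)
    _ = _ := by ring
end

section
/- For every integer N ≥ 1 and all nonnegative integers k₁, k₂, k₃ with k = k₁ + k₂ + k₃ ≤ 6 there exists a constant C > 0 such that for all t > 0 and all (x, y, z) ∈ ℝ³: |∂_x^{k₁} ∂_y^{k₂} ∂_z^{k₃} G₂(t, x, y, z)| ≤ C e^{−ε t} t^{−3/4 − k/4} (1 + (A t)⁴)^{−1/4 − k₁/4} ( 1 + x²/( t^{1/2} (1 + (A t)⁴)^{1/2} ) + (y² + z²)/t^{1/2} )^{−N}. -/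
/-!
Put `b = 1 + (A t)⁴` and rescale the frequencies: `η` and `ζ` by `β = t^{-1/4}`, and `ξ` by `βσ`
with `σ = b^{-1/4}`. With `r = √t` and `ρ = A t σ`, the symbol becomes `exp P`, where `P` is one
fixed polynomial in `ξ, η, ζ, r, ρ, σ` (`Ghat2_dil`), and the parameters satisfy `ρ⁴ + σ⁴ = 1`.
The factors `β`, `σ` produced by the Jacobian and by the derivatives are exactly the powers of `t`
and `b` in the claim, so it remains to bound the rescaled kernels
`K_Q(X) = ∫ e^{i X·q} Q(q) e^{P(q)} dq`, for `Q` a polynomial in the same six variables, by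
`C e^{-ε r²} (1 + |X|²)^{-N}` uniformly in the parameters (`exists_norm_K_decay`).

* Coercivity (`exists_P_le`): `P = -κ r² + r m - 4 ∫₀¹ v²` with `m = ∫₀¹ v`. By Cauchy–Schwarz
  `∫₀¹ v² ≥ m²`, and `m ≥ |q|² / 20` because `ρ² + σ² ≥ 1`. Since `r m - 4 m² ≤ r² / 16` and
  `κ > 1/16 + ε`, some room is left, giving `P ≤ -(ε + d) r² - c |q|² + b`. The extra decay absorbs
  any polynomial in `r` and `q`, so all amplitudes `Q e^P` are integrable with norm
  `O(e^{-ε r²})` (`exists_abs_E_le`).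
* Decay: integration by parts turns multiplication by `X_j` into
  `Q ↦ ∂_j Q + Q ∂_j P`, which stays inside the polynomials (`coord_mul_K`).
  Hence every `X_j^n K_Q` is again bounded by a kernel of the same type.
* Derivatives: `∂_{X_j} K_Q = i K_{q_j Q}`, again of the same type (`hasDerivAt_K`).
-/


open MeasureTheory

/-- Partial derivative in the first coordinate of `ℝ³ = ℝ × ℝ × ℝ`. -/
noncomputable def pdx {E : Type*} [NormedAddCommGroup E] [NormedSpace ℝ E]
    (f : ℝ × ℝ × ℝ → E) : ℝ × ℝ × ℝ → E :=
  fun p => deriv (fun u => f (u, p.2.1, p.2.2)) p.1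

/-- Partial derivative in the second coordinate. -/
noncomputable def pdy {E : Type*} [NormedAddCommGroup E] [NormedSpace ℝ E]
    (f : ℝ × ℝ × ℝ → E) : ℝ × ℝ × ℝ → E :=
  fun p => deriv (fun u => f (p.1, u, p.2.2)) p.2.1

/-- Partial derivative in the third coordinate. -/
noncomputable def pdz {E : Type*} [NormedAddCommGroup E] [NormedSpace ℝ E]
    (f : ℝ × ℝ × ℝ → E) : ℝ × ℝ × ℝ → E :=
  fun p => deriv (fun u => f (p.1, p.2.1, u)) p.2.2

/-- The mixed partial derivative `∂_x^{k₁} ∂_y^{k₂} ∂_z^{k₃}`. -/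
noncomputable def pD {E : Type*} [NormedAddCommGroup E] [NormedSpace ℝ E]
    (k₁ k₂ k₃ : ℕ) (f : ℝ × ℝ × ℝ → E) : ℝ × ℝ × ℝ → E :=
  pdx^[k₁] (pdy^[k₂] (pdz^[k₃] f))

namespace GreenKernel

open MvPolynomial

/-- Values of the six indeterminates: the frequencies `q = (ξ, η, ζ)` come first, then the
parameters `w = (r, ρ, σ)`. -/
noncomputable def env (w q : ℝ × ℝ × ℝ) : Fin 6 → ℝ :=
  ![q.1, q.2.1, q.2.2, w.1, w.2.1, w.2.2]

/-- The polynomial `∫₀¹ v dτ` for the rescaled symbol `v(τ) = σ²ξ² + ζ² + (η + ρξτ)²`. -/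
noncomputable def Q1 : MvPolynomial (Fin 6) ℝ :=
  X 5 ^ 2 * X 0 ^ 2 + X 2 ^ 2 +
    (X 1 ^ 2 + X 1 * (X 4 * X 0) + C (1 / 3) * (X 4 * X 0) ^ 2)

/-- The polynomial `∫₀¹ v² dτ` for the rescaled symbol `v(τ) = σ²ξ² + ζ² + (η + ρξτ)²`. -/
noncomputable def Q2 : MvPolynomial (Fin 6) ℝ :=
  (X 5 ^ 2 * X 0 ^ 2 + X 2 ^ 2) ^ 2 +
    C 2 * (X 5 ^ 2 * X 0 ^ 2 + X 2 ^ 2) *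
      (X 1 ^ 2 + X 1 * (X 4 * X 0) + C (1 / 3) * (X 4 * X 0) ^ 2) +
    (X 1 ^ 4 + C 2 * X 1 ^ 3 * (X 4 * X 0) + C 2 * X 1 ^ 2 * (X 4 * X 0) ^ 2 +
      X 1 * (X 4 * X 0) ^ 3 + C (1 / 5) * (X 4 * X 0) ^ 4)

/-- The exponent of the rescaled symbol, where `r = √t`. -/
noncomputable def P (κ : ℝ) : MvPolynomial (Fin 6) ℝ :=
  -(C κ * X 3 ^ 2) + X 3 * Q1 - C 4 * Q2

/-- The admissible parameters `w = (r, ρ, σ)`. -/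
def Par (w : ℝ × ℝ × ℝ) : Prop :=
  0 ≤ w.1 ∧ 0 ≤ w.2.1 ∧ 0 ≤ w.2.2 ∧ w.2.1 ^ 4 + w.2.2 ^ 4 = 1

/-- The amplitude `Q e^P`. -/
noncomputable def E (κ : ℝ) (Q : MvPolynomial (Fin 6) ℝ) (w q : ℝ × ℝ × ℝ) : ℝ :=
  eval (env w q) Q * Real.exp (eval (env w q) (P κ))

/-! ### Polynomial amplitudes and coercivity of the exponent -/

/-- Polynomial growth, with `B` an upper bound for all the variables. -/
theorem exists_abs_eval_le (Q : MvPolynomial (Fin 6) ℝ) :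
    ∃ (C : ℝ) (n : ℕ), 0 ≤ C ∧ ∀ (x : Fin 6 → ℝ) (B : ℝ), 1 ≤ B → (∀ i, |x i| ≤ B) →
      |eval x Q| ≤ C * B ^ n := by
  induction Q using MvPolynomial.induction_on with
  | C a => exact ⟨|a|, 0, abs_nonneg _, fun x B _ _ => by simp⟩
  | add p q hp hq =>
    obtain ⟨C, n, hC, h⟩ := hp
    obtain ⟨D, m, hD, h'⟩ := hq
    refine ⟨C + D, n + m, by positivity, fun x B hB hx => ?_⟩
    rw [map_add]
    have h1 : B ^ n ≤ B ^ (n + m) := pow_le_pow_right₀ hB (by omega)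
    have h2 : B ^ m ≤ B ^ (n + m) := pow_le_pow_right₀ hB (by omega)
    calc |eval x p + eval x q| ≤ |eval x p| + |eval x q| := abs_add_le _ _
      _ ≤ C * B ^ n + D * B ^ m := add_le_add (h x B hB hx) (h' x B hB hx)
      _ ≤ C * B ^ (n + m) + D * B ^ (n + m) := by gcongr
      _ = _ := by ring
  | mul_X p i hp =>
    obtain ⟨C, n, hC, h⟩ := hp
    refine ⟨C, n + 1, hC, fun x B hB hx => ?_⟩
    rw [map_mul, eval_X, abs_mul, pow_succ, ← mul_assoc]
    exact mul_le_mul (h x B hB hx) (hx i) (abs_nonneg _) (by positivity)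

theorem Par.le_one {w : ℝ × ℝ × ℝ} (hw : Par w) : w.2.1 ≤ 1 ∧ w.2.2 ≤ 1 := by
  obtain ⟨-, h1, h2, h3⟩ := hw
  constructor
  · by_contra! h
    have := one_lt_pow₀ h (n := 4) (by norm_num)
    have : 0 ≤ w.2.2 ^ 4 := by positivity
    linarith
  · by_contra! h
    have := one_lt_pow₀ h (n := 4) (by norm_num)
    have : 0 ≤ w.2.1 ^ 4 := by positivity
    linarith

theorem abs_env_le {w : ℝ × ℝ × ℝ} (hw : Par w) (q : ℝ × ℝ × ℝ) (i : Fin 6) :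
    |env w q i| ≤ (1 + w.1) * (1 + ‖q‖) := by
  have hr := hw.1
  have hq := norm_nonneg q
  have h1 : |q.1| ≤ ‖q‖ := norm_fst_le q
  have h2 : |q.2.1| ≤ ‖q‖ := (norm_fst_le q.2).trans (norm_snd_le q)
  have h3 : |q.2.2| ≤ ‖q‖ := (norm_snd_le q.2).trans (norm_snd_le q)
  have h4 := hw.le_one
  have h5 := hw.2.1
  have h6 := hw.2.2.1
  have := mul_nonneg hr hq
  fin_cases i <;> simp [env, abs_of_nonneg, *] <;> nlinarith

/-- Gaussians absorb polynomial growth, with an explicit constant. -/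
theorem one_add_pow_le_exp (n : ℕ) {c : ℝ} (hc : 0 < c) {u : ℝ} (hu : 0 ≤ u) :
    (1 + u) ^ n ≤ Real.exp (n ^ 2 / (4 * c)) * Real.exp (c * u ^ 2) := by
  have h1 : (1 + u) ^ n ≤ Real.exp u ^ n :=
    pow_le_pow_left₀ (by positivity) (by linarith [Real.add_one_le_exp u]) n
  rw [← Real.exp_nat_mul] at h1
  rw [← Real.exp_add]
  refine h1.trans (Real.exp_le_exp.2 ?_)
  have : (n : ℝ) ^ 2 / (4 * c) + c * u ^ 2 - n * u = (n - 2 * c * u) ^ 2 / (4 * c) := by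
    field_simp; ring
  have : 0 ≤ ((n : ℝ) - 2 * c * u) ^ 2 / (4 * c) := by positivity
  linarith

/-- Cauchy–Schwarz on `[0, 1]`: the difference is the variance of `(η + ρξτ)²`. -/
theorem Q1_sq_le_Q2 (x : Fin 6 → ℝ) : eval x Q1 ^ 2 ≤ eval x Q2 := by
  simp only [Q1, Q2, map_add, map_mul, map_pow, eval_X, eval_C]
  generalize x 4 * x 0 = b
  nlinarith [mul_nonneg (sq_nonneg b) (sq_nonneg (x 1 + b / 2)),
    mul_nonneg (sq_nonneg b) (sq_nonneg b)]

theorem norm_sq_le_Q1 {w : ℝ × ℝ × ℝ} (hw : Par w) (q : ℝ × ℝ × ℝ) :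
    ‖q‖ ^ 2 / 20 ≤ eval (env w q) Q1 := by
  obtain ⟨h4, h5⟩ := hw.le_one
  obtain ⟨h0, h1, h2, h3⟩ := hw
  obtain ⟨ξ, η, ζ⟩ := q
  obtain ⟨r, ρ, σ⟩ := w
  simp only at *
  have hρσ : 1 ≤ ρ ^ 2 + σ ^ 2 := by
    have : ρ ^ 4 ≤ ρ ^ 2 := pow_le_pow_of_le_one h1 h4 (by norm_num)
    have : σ ^ 4 ≤ σ ^ 2 := pow_le_pow_of_le_one h2 h5 (by norm_num)
    linarith
  have hn : ‖((ξ, η, ζ) : ℝ × ℝ × ℝ)‖ ^ 2 ≤ ξ ^ 2 + η ^ 2 + ζ ^ 2 := by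
    have : ‖((ξ, η, ζ) : ℝ × ℝ × ℝ)‖ = max |ξ| (max |η| |ζ|) := rfl
    rw [this]
    have a1 := sq_abs ξ
    have a2 := sq_abs η
    have a3 := sq_abs ζ
    rcases max_choice |ξ| (max |η| |ζ|) with h | h <;> rw [h]
    · nlinarith [sq_nonneg η, sq_nonneg ζ]
    · rcases max_choice |η| |ζ| with h | h <;> rw [h] <;>
        nlinarith [sq_nonneg η, sq_nonneg ζ, sq_nonneg ξ]
  have e : eval (env (r, ρ, σ) (ξ, η, ζ)) Q1 =
      σ ^ 2 * ξ ^ 2 + ζ ^ 2 + (η ^ 2 + η * (ρ * ξ) + 1 / 3 * (ρ * ξ) ^ 2) := by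
    simp [Q1, env]
  rw [e]
  have h6 : ξ ^ 2 ≤ (ρ * ξ) ^ 2 + σ ^ 2 * ξ ^ 2 := by nlinarith [sq_nonneg ξ]
  have : 0 ≤ σ ^ 2 * ξ ^ 2 := by positivity
  nlinarith [sq_nonneg (η + 10 / 19 * (ρ * ξ)), sq_nonneg ζ, sq_nonneg (ρ * ξ)]

/-- Coercivity of the exponent. The gap `κ - 1/16 - ε` is split between the decay in time and the
decay in frequency. -/
theorem exists_P_le {κ ε : ℝ} (hκ : 1 / 16 + ε < κ) :
    ∃ d c b : ℝ, 0 < d ∧ 0 < c ∧ ∀ w, Par w → ∀ q,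
      eval (env w q) (P κ) ≤ -ε * w.1 ^ 2 - d * w.1 ^ 2 - c * ‖q‖ ^ 2 + b := by
  obtain ⟨d, hd, rfl⟩ : ∃ d, 0 < d ∧ κ = 1 / 16 + ε + 2 * d :=
    ⟨(κ - 1 / 16 - ε) / 2, by linarith, by ring⟩
  set a : ℝ := 1 / 16 + d with ha
  set c : ℝ := 4 - 1 / (4 * a) with hc
  have ha0 : 0 < a := by positivity
  have hc0 : 0 < c := by
    rw [hc, sub_pos, div_lt_iff₀ (by positivity)]; linarith
  -- Below, `r m ≤ a r² + m² / (4a)` and `4 - c = 1 / (4a)`; the surplus `c m²` is turned into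
  -- quadratic decay by `u² ≥ 2u - 1`.
  refine ⟨d, c / 200, c / 400, hd, by positivity, fun w hw q => ?_⟩
  have h1 := Q1_sq_le_Q2 (env w q)
  have h2 := norm_sq_le_Q1 hw q
  have e : eval (env w q) (P (1 / 16 + ε + 2 * d)) =
      -((1 / 16 + ε + 2 * d) * w.1 ^ 2) + w.1 * eval (env w q) Q1
        - 4 * eval (env w q) Q2 := by
    simp [P, env]
  rw [e]
  set m := eval (env w q) Q1
  have hy : w.1 * m ≤ a * w.1 ^ 2 + (4 - c) * m ^ 2 := by
    have : a * w.1 ^ 2 + (4 - c) * m ^ 2 - w.1 * m = (2 * a * w.1 - m) ^ 2 / (4 * a) := by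
      rw [hc]; field_simp; ring
    have : 0 ≤ (2 * a * w.1 - m) ^ 2 / (4 * a) := by positivity
    linarith
  have h3 : (2 * ‖q‖ ^ 2 - 1) / 400 ≤ m ^ 2 := by
    have : (‖q‖ ^ 2 / 20) ^ 2 ≤ m ^ 2 := pow_le_pow_left₀ (by positivity) h2 2
    nlinarith [sq_nonneg (‖q‖ ^ 2 - 1)]
  have h4 := mul_le_mul_of_nonneg_left h3 hc0.le
  rw [ha] at hy
  nlinarith

/-- Every amplitude decays, uniformly in the admissible parameters. -/
theorem exists_abs_E_le {κ ε : ℝ} (hκ : 1 / 16 + ε < κ) (Q : MvPolynomial (Fin 6) ℝ) :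
    ∃ C : ℝ, 0 ≤ C ∧ ∀ w, Par w → ∀ q,
      |E κ Q w q| ≤ C * Real.exp (-ε * w.1 ^ 2) * (1 + ‖q‖) ^ (-(4 : ℝ)) := by
  obtain ⟨d, c, b, hd, hc, hP⟩ := exists_P_le hκ
  obtain ⟨C, n, hC, hQ⟩ := exists_abs_eval_le Q
  refine ⟨C * Real.exp (n ^ 2 / (4 * d)) * Real.exp ((n + 4 : ℕ) ^ 2 / (4 * c)) * Real.exp b,
    by positivity, fun w hw q => ?_⟩
  have hr := hw.1
  have hq := norm_nonneg q
  have h1 := hQ (env w q) ((1 + w.1) * (1 + ‖q‖)) (by nlinarith [mul_nonneg hr hq])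
    (abs_env_le hw q)
  have h2 := one_add_pow_le_exp n hd hr
  have h3 := one_add_pow_le_exp (n + 4) hc hq
  have h4 : (1 + ‖q‖) ^ (-(4 : ℝ)) = ((1 + ‖q‖) ^ 4)⁻¹ := by
    rw [Real.rpow_neg (by positivity)]; norm_cast
  rw [h4, ← div_eq_mul_inv, le_div_iff₀ (by positivity), E, abs_mul, Real.abs_exp]
  calc |eval (env w q) Q| * Real.exp (eval (env w q) (P κ)) * (1 + ‖q‖) ^ 4
      ≤ (C * ((1 + w.1) * (1 + ‖q‖)) ^ n) *
          Real.exp (-ε * w.1 ^ 2 - d * w.1 ^ 2 - c * ‖q‖ ^ 2 + b) * (1 + ‖q‖) ^ 4 := by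
        gcongr; exact hP w hw q
    _ = C * (1 + w.1) ^ n * (1 + ‖q‖) ^ (n + 4) *
          Real.exp (-ε * w.1 ^ 2 - d * w.1 ^ 2 - c * ‖q‖ ^ 2 + b) := by
        rw [mul_pow, pow_add]; ring
    _ ≤ C * (Real.exp (n ^ 2 / (4 * d)) * Real.exp (d * w.1 ^ 2)) *
          (Real.exp ((n + 4 : ℕ) ^ 2 / (4 * c)) * Real.exp (c * ‖q‖ ^ 2)) *
          Real.exp (-ε * w.1 ^ 2 - d * w.1 ^ 2 - c * ‖q‖ ^ 2 + b) := by
        gcongr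
    _ = _ := by
        have : Real.exp (d * w.1 ^ 2) * Real.exp (c * ‖q‖ ^ 2) *
            Real.exp (-ε * w.1 ^ 2 - d * w.1 ^ 2 - c * ‖q‖ ^ 2 + b) =
            Real.exp b * Real.exp (-ε * w.1 ^ 2) := by
          simp only [← Real.exp_add]; congr 1; ring
        linear_combination (C * Real.exp (n ^ 2 / (4 * d)) *
          Real.exp ((n + 4 : ℕ) ^ 2 / (4 * c))) * this

/-! ### Oscillatory integrals -/

/-- The oscillatory factor `e^{i X · q}`. -/
noncomputable def osc (X q : ℝ × ℝ × ℝ) : ℂ :=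
  Complex.exp (Complex.I * ((X.1 * q.1 + X.2.1 * q.2.1 + X.2.2 * q.2.2 : ℝ) : ℂ))

/-- The rescaled kernel with amplitude `Q e^P`, evaluated at `X`. -/
noncomputable def K (κ : ℝ) (Q : MvPolynomial (Fin 6) ℝ) (w X : ℝ × ℝ × ℝ) : ℂ :=
  ∫ q : ℝ × ℝ × ℝ, osc X q * (E κ Q w q : ℂ)

/-- The standard basis of `ℝ³`. -/
def basis : Fin 3 → ℝ × ℝ × ℝ := ![(1, 0, 0), (0, 1, 0), (0, 0, 1)]

/-- The coordinates on `ℝ³`. -/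
def coord (j : Fin 3) (X : ℝ × ℝ × ℝ) : ℝ := ![X.1, X.2.1, X.2.2] j

/-- The indeterminate of the `j`-th frequency. -/
def idx (j : Fin 3) : Fin 6 := j.castLE (by norm_num)

/-- The operator `Q ↦ ∂_j Q + Q ∂_j P`, which is `∂_j` acting on the amplitude `Q e^P`. -/
noncomputable def D (κ : ℝ) (j : Fin 3) (Q : MvPolynomial (Fin 6) ℝ) :
    MvPolynomial (Fin 6) ℝ :=
  pderiv (idx j) Q + Q * pderiv (idx j) (P κ)

theorem norm_osc (X q : ℝ × ℝ × ℝ) : ‖osc X q‖ = 1 := by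
  rw [osc, mul_comm, Complex.norm_exp_ofReal_mul_I]

theorem continuous_osc (X : ℝ × ℝ × ℝ) : Continuous (osc X) := by
  unfold osc; fun_prop

theorem continuous_env (w : ℝ × ℝ × ℝ) : Continuous (env w) := by
  refine continuous_pi fun i => ?_
  fin_cases i <;> simp [env] <;> fun_prop

theorem continuous_E (κ : ℝ) (Q : MvPolynomial (Fin 6) ℝ) (w : ℝ × ℝ × ℝ) :
    Continuous (E κ Q w) :=
  (Q.continuous_eval.comp (continuous_env w)).mul
    (Real.continuous_exp.comp ((P κ).continuous_eval.comp (continuous_env w)))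

instance isAddHaarMeasure_prod : (volume : Measure (ℝ × ℝ)).IsAddHaarMeasure :=
  inferInstanceAs ((volume : Measure ℝ).prod volume).IsAddHaarMeasure

instance isAddHaarMeasure_prod_prod : (volume : Measure (ℝ × ℝ × ℝ)).IsAddHaarMeasure :=
  inferInstanceAs ((volume : Measure ℝ).prod (volume : Measure (ℝ × ℝ))).IsAddHaarMeasure

theorem integrable_weight :
    Integrable (fun q : ℝ × ℝ × ℝ => (1 + ‖q‖) ^ (-(4 : ℝ))) :=
  integrable_one_add_norm (by simp; norm_num)

variable {κ ε : ℝ}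

theorem integrable_E (hκ : 1 / 16 + ε < κ) (Q : MvPolynomial (Fin 6) ℝ) {w : ℝ × ℝ × ℝ}
    (hw : Par w) : Integrable (E κ Q w) := by
  obtain ⟨C, -, h⟩ := exists_abs_E_le hκ Q
  exact (integrable_weight.const_mul (C * Real.exp (-ε * w.1 ^ 2))).mono'
    (continuous_E κ Q w).aestronglyMeasurable (.of_forall fun q => h w hw q)

theorem integrable_osc_mul_E (hκ : 1 / 16 + ε < κ) (Q : MvPolynomial (Fin 6) ℝ)
    {w : ℝ × ℝ × ℝ} (hw : Par w) (X : ℝ × ℝ × ℝ) :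
    Integrable (fun q => osc X q * (E κ Q w q : ℂ)) := by
  refine (integrable_E hκ Q hw).norm.mono' ?_ (.of_forall fun q => ?_)
  · exact ((continuous_osc X).mul
      (Complex.continuous_ofReal.comp (continuous_E κ Q w))).aestronglyMeasurable
  · rw [norm_mul, norm_osc, one_mul, Complex.norm_real]

theorem exists_norm_K_le (hκ : 1 / 16 + ε < κ) (Q : MvPolynomial (Fin 6) ℝ) :
    ∃ C : ℝ, 0 ≤ C ∧ ∀ w, Par w → ∀ X, ‖K κ Q w X‖ ≤ C * Real.exp (-ε * w.1 ^ 2) := by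
  obtain ⟨C, hC, h⟩ := exists_abs_E_le hκ Q
  refine ⟨C * ∫ q : ℝ × ℝ × ℝ, (1 + ‖q‖) ^ (-(4 : ℝ)),
    mul_nonneg hC (integral_nonneg fun q => by positivity), fun w hw X => ?_⟩
  have := norm_integral_le_of_norm_le
    (integrable_weight.const_mul (C * Real.exp (-ε * w.1 ^ 2)))
    (.of_forall fun q => show ‖osc X q * (E κ Q w q : ℂ)‖ ≤ _ by
      rw [norm_mul, norm_osc, one_mul, Complex.norm_real]; exact h w hw q)
  rw [integral_const_mul] at this
  refine this.trans_eq (by ring)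

theorem env_add_smul (w q : ℝ × ℝ × ℝ) (j : Fin 3) (u : ℝ) (i : Fin 6) :
    env w (q + u • basis j) i = env w q i + u * (if i = idx j then 1 else 0) := by
  fin_cases j <;> fin_cases i <;> simp [env, basis, idx]

theorem hasDerivAt_eval (Q : MvPolynomial (Fin 6) ℝ) (w q : ℝ × ℝ × ℝ) (j : Fin 3) :
    HasDerivAt (fun u : ℝ => eval (env w (q + u • basis j)) Q)
      (eval (env w q) (pderiv (idx j) Q)) 0 := by
  induction Q using MvPolynomial.induction_on with
  | C a => simpa using hasDerivAt_const (0 : ℝ) a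
  | add p q hp hq => simp only [map_add]; exact hp.add hq
  | mul_X p i hp =>
    have hX : HasDerivAt (fun u : ℝ => env w (q + u • basis j) i)
        (if i = idx j then 1 else 0) 0 := by
      simp only [env_add_smul]
      simpa using ((hasDerivAt_id (0 : ℝ)).mul_const (if i = idx j then (1 : ℝ) else 0)).const_add
        (env w q i)
    have := hp.mul hX
    simp only [map_mul, eval_X, Derivation.leibniz, pderiv_X, smul_eq_mul, map_add]
    refine this.congr_deriv ?_
    simp only [zero_smul, add_zero, Pi.single_apply]
    split_ifs <;> simp <;> ring

theorem hasDerivAt_E (Q : MvPolynomial (Fin 6) ℝ) (w q : ℝ × ℝ × ℝ) (j : Fin 3) :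
    HasLineDerivAt ℝ (fun q => (E κ Q w q : ℂ)) (E κ (D κ j Q) w q : ℂ) q (basis j) := by
  have h := ((hasDerivAt_eval Q w q j).mul (hasDerivAt_eval (P κ) w q j).exp).ofReal_comp
  refine h.congr_deriv ?_
  simp only [zero_smul, add_zero, E, D, map_add, map_mul]
  push_cast
  ring

theorem osc_add_smul_left (X q : ℝ × ℝ × ℝ) (j : Fin 3) (u : ℝ) :
    osc (X + u • basis j) q = osc X q * Complex.exp (Complex.I * (u * coord j q)) := by
  rw [osc, osc, ← Complex.exp_add]
  congr 1
  fin_cases j <;> simp [basis, coord] <;> ring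

theorem osc_comm (X q : ℝ × ℝ × ℝ) : osc X q = osc q X := by
  simp only [osc, mul_comm]

theorem hasDerivAt_osc (X q : ℝ × ℝ × ℝ) (j : Fin 3) (u : ℝ) :
    HasDerivAt (fun u : ℝ => osc (X + u • basis j) q)
      (Complex.I * coord j q * osc (X + u • basis j) q) u := by
  simp only [osc_add_smul_left]
  have h : HasDerivAt (fun u : ℝ => (u : ℂ)) 1 u := Complex.ofRealCLM.hasDerivAt
  refine ((((h.mul_const (coord j q : ℂ)).const_mul Complex.I).cexp).const_mul
    (osc X q)).congr_deriv ?_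
  ring

theorem E_X_mul (Q : MvPolynomial (Fin 6) ℝ) (w q : ℝ × ℝ × ℝ) (j : Fin 3) :
    E κ (X (idx j) * Q) w q = coord j q * E κ Q w q := by
  have : env w q (idx j) = coord j q := by
    fin_cases j <;> rfl
  simp [E, this, mul_assoc]

/-- Differentiation in physical space multiplies the amplitude by `i` times a frequency. -/
theorem hasDerivAt_K (hκ : 1 / 16 + ε < κ) (Q : MvPolynomial (Fin 6) ℝ) {w : ℝ × ℝ × ℝ}
    (hw : Par w) (Y : ℝ × ℝ × ℝ) (j : Fin 3) :
    HasDerivAt (fun u : ℝ => K κ Q w (Y + u • basis j))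
      (Complex.I * K κ (X (idx j) * Q) w Y) 0 := by
  have hQ' : ∀ q, E κ (X (idx j) * Q) w q = coord j q * E κ Q w q :=
    fun q => E_X_mul Q w q j
  generalize X (idx j) * Q = Q' at hQ' ⊢
  have hdiff : ∀ (q : ℝ × ℝ × ℝ) (u : ℝ),
      HasDerivAt (fun u : ℝ => osc (Y + u • basis j) q * (E κ Q w q : ℂ))
        (Complex.I * (osc (Y + u • basis j) q * (E κ Q' w q : ℂ))) u := by
    intro q u
    refine ((hasDerivAt_osc Y q j u).mul_const (E κ Q w q : ℂ)).congr_deriv ?_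
    rw [hQ', Complex.ofReal_mul]
    ring
  have hbound : ∀ (q : ℝ × ℝ × ℝ) (u : ℝ),
      ‖Complex.I * (osc (Y + u • basis j) q * (E κ Q' w q : ℂ))‖ ≤ ‖E κ Q' w q‖ := by
    intro q u
    rw [norm_mul, norm_mul, norm_osc, Complex.norm_I, one_mul, one_mul, Complex.norm_real]
  have hd := (hasDerivAt_integral_of_dominated_loc_of_deriv_le (μ := volume) (x₀ := (0 : ℝ))
    (F := fun u q => osc (Y + u • basis j) q * (E κ Q w q : ℂ))
    (F' := fun u q => Complex.I * (osc (Y + u • basis j) q * (E κ Q' w q : ℂ)))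
    (bound := fun q => ‖E κ Q' w q‖) Filter.univ_mem
    (.of_forall fun u => (integrable_osc_mul_E hκ Q hw _).aestronglyMeasurable)
    (integrable_osc_mul_E hκ Q hw _)
    ((integrable_osc_mul_E hκ Q' hw _).const_mul Complex.I).aestronglyMeasurable
    (.of_forall fun q u _ => hbound q u)
    (integrable_E hκ Q' hw).norm
    (.of_forall fun q u _ => hdiff q u)).2
  simp only [zero_smul, add_zero, integral_const_mul] at hd
  exact hd

/-- Integration by parts: multiplication by `X_j` in physical space becomes `D j` on the
amplitude, up to a factor of modulus one. -/
theorem coord_mul_K (hκ : 1 / 16 + ε < κ) (Q : MvPolynomial (Fin 6) ℝ) {w : ℝ × ℝ × ℝ}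
    (hw : Par w) (Y : ℝ × ℝ × ℝ) (j : Fin 3) :
    coord j Y * K κ Q w Y = Complex.I * K κ (D κ j Q) w Y := by
  have key := integral_bilinear_hasLineDerivAt_right_eq_neg_left_of_integrable
    (μ := (volume : Measure (ℝ × ℝ × ℝ))) (B := ContinuousLinearMap.mul ℝ ℂ)
    (f := osc Y) (f' := fun q => Complex.I * coord j Y * osc Y q)
    (g := fun q => (E κ Q w q : ℂ)) (g' := fun q => (E κ (D κ j Q) w q : ℂ)) (v := basis j)
    (by simpa [mul_assoc] using (((integrable_osc_mul_E hκ Q hw Y).const_mul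
          (coord j Y : ℂ)).const_mul Complex.I))
    (integrable_osc_mul_E hκ _ hw Y) (integrable_osc_mul_E hκ _ hw Y)
    (fun q _ => by
      have := hasDerivAt_osc q Y j 0
      simp only [zero_smul, add_zero, osc_comm _ Y] at this
      exact this)
    (fun q _ => hasDerivAt_E Q w q j)
  simp only [ContinuousLinearMap.mul_apply', mul_assoc] at key
  rw [integral_const_mul, integral_const_mul] at key
  change K κ (D κ j Q) w Y = -(Complex.I * (coord j Y * K κ Q w Y)) at key
  rw [key]
  linear_combination (coord j Y * K κ Q w Y) * Complex.I_mul_I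

theorem abs_coord_pow_mul_norm_K (hκ : 1 / 16 + ε < κ) (Q : MvPolynomial (Fin 6) ℝ)
    {w : ℝ × ℝ × ℝ} (hw : Par w) (Y : ℝ × ℝ × ℝ) (j : Fin 3) (n : ℕ) :
    |coord j Y| ^ n * ‖K κ Q w Y‖ = ‖K κ ((D κ j)^[n] Q) w Y‖ := by
  induction n generalizing Q with
  | zero => simp
  | succ n ih =>
    rw [Function.iterate_succ_apply, ← ih, pow_succ, mul_assoc]
    congr 1
    have := congrArg norm (coord_mul_K hκ Q hw Y j)
    simpa using this

theorem exists_coord_pow_mul_norm_K_le (hκ : 1 / 16 + ε < κ) (Q : MvPolynomial (Fin 6) ℝ)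
    (j : Fin 3) (n : ℕ) :
    ∃ C : ℝ, 0 ≤ C ∧ ∀ w, Par w → ∀ X,
      (coord j X ^ 2) ^ n * ‖K κ Q w X‖ ≤ C * Real.exp (-ε * w.1 ^ 2) := by
  obtain ⟨C, hC, h⟩ := exists_norm_K_le hκ ((D κ j)^[2 * n] Q)
  refine ⟨C, hC, fun w hw X => ?_⟩
  rw [← sq_abs, ← pow_mul, abs_coord_pow_mul_norm_K hκ Q hw]
  exact h w hw X

theorem add_four_pow_le (a b c : ℝ) (ha : 0 ≤ a) (hb : 0 ≤ b) (hc : 0 ≤ c) (N : ℕ) :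
    (1 + a + b + c) ^ N ≤ 4 ^ N * (1 + a ^ N + b ^ N + c ^ N) := by
  obtain ⟨m, hm, hle, hN⟩ : ∃ m : ℝ, 0 ≤ m ∧ 1 + a + b + c ≤ 4 * m ∧
      m ^ N ≤ 1 + a ^ N + b ^ N + c ^ N := by
    have h1 := pow_nonneg ha N
    have h2 := pow_nonneg hb N
    have h3 := pow_nonneg hc N
    refine ⟨max (max 1 a) (max b c), by positivity, ?_, ?_⟩
    · have := le_max_left (1 : ℝ) a
      have := le_max_right (1 : ℝ) a
      have := le_max_left b c
      have := le_max_right b c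
      have := le_max_left (max 1 a) (max b c)
      have := le_max_right (max 1 a) (max b c)
      linarith
    · rcases max_choice (max 1 a) (max b c) with h | h <;> rw [h]
      · rcases max_choice 1 a with h | h <;> rw [h] <;> try rw [one_pow]
        all_goals linarith
      · rcases max_choice b c with h | h <;> rw [h] <;> linarith
  calc (1 + a + b + c) ^ N ≤ (4 * m) ^ N := pow_le_pow_left₀ (by positivity) hle N
    _ = 4 ^ N * m ^ N := mul_pow _ _ _
    _ ≤ _ := by gcongr

/-- Rapid decay of the rescaled kernels, uniformly in the admissible parameters. -/
theorem exists_norm_K_decay (hκ : 1 / 16 + ε < κ) (Q : MvPolynomial (Fin 6) ℝ) (N : ℕ) :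
    ∃ C : ℝ, 0 < C ∧ ∀ w, Par w → ∀ x y z : ℝ, ‖K κ Q w (x, y, z)‖ ≤
      C * Real.exp (-ε * w.1 ^ 2) * (1 + x ^ 2 + (y ^ 2 + z ^ 2)) ^ (-(N : ℝ)) := by
  obtain ⟨C, hC, h⟩ := exists_norm_K_le hκ Q
  choose c hc h' using fun j => exists_coord_pow_mul_norm_K_le hκ Q j N
  have h0 := hc 0
  have h1 := hc 1
  have h2 := hc 2
  refine ⟨4 ^ N * (C + c 0 + c 1 + c 2) + 1, by positivity, fun w hw x y z => ?_⟩
  have e0 := h w hw (x, y, z)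
  have e1 : (x ^ 2) ^ N * _ ≤ _ := h' 0 w hw (x, y, z)
  have e2 : (y ^ 2) ^ N * _ ≤ _ := h' 1 w hw (x, y, z)
  have e3 : (z ^ 2) ^ N * _ ≤ _ := h' 2 w hw (x, y, z)
  have e4 := add_four_pow_le (x ^ 2) (y ^ 2) (z ^ 2) (sq_nonneg _) (sq_nonneg _) (sq_nonneg _) N
  rw [Real.rpow_neg (by positivity), Real.rpow_natCast, ← div_eq_mul_inv,
    le_div_iff₀ (by positivity), ← add_assoc, mul_comm]
  have hE := Real.exp_pos (-ε * w.1 ^ 2)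
  set k := ‖K κ Q w (x, y, z)‖
  have hk : 0 ≤ k := norm_nonneg _
  calc (1 + x ^ 2 + y ^ 2 + z ^ 2) ^ N * k
      ≤ 4 ^ N * (1 + (x ^ 2) ^ N + (y ^ 2) ^ N + (z ^ 2) ^ N) * k := by gcongr
    _ = 4 ^ N * (k + (x ^ 2) ^ N * k + (y ^ 2) ^ N * k + (z ^ 2) ^ N * k) := by ring
    _ ≤ 4 ^ N * (C * Real.exp (-ε * w.1 ^ 2) + c 0 * Real.exp (-ε * w.1 ^ 2) +
          c 1 * Real.exp (-ε * w.1 ^ 2) + c 2 * Real.exp (-ε * w.1 ^ 2)) := by gcongr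
    _ ≤ _ := by linarith

/-! ### Partial derivatives of the rescaled kernels -/

theorem hasDerivAt_K_comp (hκ : 1 / 16 + ε < κ) (Q : MvPolynomial (Fin 6) ℝ) {w : ℝ × ℝ × ℝ}
    (hw : Par w) (j : Fin 3) (a u : ℝ) (c : ℂ) (f : ℝ → ℝ × ℝ × ℝ)
    (hf : ∀ v, f v = f u + (a * (v - u)) • basis j) :
    HasDerivAt (fun v => c * K κ Q w (f v)) (c * (a * Complex.I) * K κ (X (idx j) * Q) w (f u))
      u := by
  have h1 : HasDerivAt (fun v : ℝ => a * (v - u)) a u := by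
    simpa using ((hasDerivAt_id u).sub_const u).const_mul a
  have h2 := hasDerivAt_K hκ Q hw (f u) j
  have h3 : HasDerivAt (fun v : ℝ => K κ Q w (f u + v • basis j))
      (Complex.I * K κ (X (idx j) * Q) w (f u)) (a * (u - u)) := by
    simpa using h2
  have h4 := (h3.scomp u h1).const_mul c
  have e : (fun v => c * K κ Q w (f v)) =
      fun v => c * ((fun v : ℝ => K κ Q w (f u + v • basis j)) ∘ fun v => a * (v - u)) v := by
    funext v
    simp only [Function.comp_apply]
    rw [← hf v]
  rw [e]
  refine h4.congr_deriv ?_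
  rw [Complex.real_smul]
  ring

/-- The anisotropic dilation `(x, y, z) ↦ (αx, βy, βz)`. -/
def dil (α β : ℝ) (p : ℝ × ℝ × ℝ) : ℝ × ℝ × ℝ := (α * p.1, β * p.2.1, β * p.2.2)

theorem iterate_pdx (hκ : 1 / 16 + ε < κ) (Q : MvPolynomial (Fin 6) ℝ) {w : ℝ × ℝ × ℝ}
    (hw : Par w) (α β : ℝ) (c : ℂ) (n : ℕ) :
    pdx^[n] (fun p => c * K κ Q w (dil α β p)) =
      fun p => c * (α * Complex.I) ^ n * K κ ((X (idx 0) * ·)^[n] Q) w (dil α β p) := by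
  induction n generalizing c Q with
  | zero => simp
  | succ n ih =>
    have : pdx (fun p => c * K κ Q w (dil α β p)) =
        fun p => c * (α * Complex.I) * K κ (X (idx 0) * Q) w (dil α β p) := by
      funext p
      exact (hasDerivAt_K_comp hκ Q hw 0 α p.1 c (fun v => dil α β (v, p.2.1, p.2.2))
        (fun v => by simp [dil, basis]; ring)).deriv
    rw [Function.iterate_succ_apply, this, ih]
    simp only [Function.iterate_succ_apply, pow_succ', mul_assoc]

theorem iterate_pdy (hκ : 1 / 16 + ε < κ) (Q : MvPolynomial (Fin 6) ℝ) {w : ℝ × ℝ × ℝ}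
    (hw : Par w) (α β : ℝ) (c : ℂ) (n : ℕ) :
    pdy^[n] (fun p => c * K κ Q w (dil α β p)) =
      fun p => c * (β * Complex.I) ^ n * K κ ((X (idx 1) * ·)^[n] Q) w (dil α β p) := by
  induction n generalizing c Q with
  | zero => simp
  | succ n ih =>
    have : pdy (fun p => c * K κ Q w (dil α β p)) =
        fun p => c * (β * Complex.I) * K κ (X (idx 1) * Q) w (dil α β p) := by
      funext p
      exact (hasDerivAt_K_comp hκ Q hw 1 β p.2.1 c (fun v => dil α β (p.1, v, p.2.2))
        (fun v => by simp [dil, basis]; ring)).deriv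
    rw [Function.iterate_succ_apply, this, ih]
    simp only [Function.iterate_succ_apply, pow_succ', mul_assoc]

theorem iterate_pdz (hκ : 1 / 16 + ε < κ) (Q : MvPolynomial (Fin 6) ℝ) {w : ℝ × ℝ × ℝ}
    (hw : Par w) (α β : ℝ) (c : ℂ) (n : ℕ) :
    pdz^[n] (fun p => c * K κ Q w (dil α β p)) =
      fun p => c * (β * Complex.I) ^ n * K κ ((X (idx 2) * ·)^[n] Q) w (dil α β p) := by
  induction n generalizing c Q with
  | zero => simp
  | succ n ih =>
    have : pdz (fun p => c * K κ Q w (dil α β p)) =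
        fun p => c * (β * Complex.I) * K κ (X (idx 2) * Q) w (dil α β p) := by
      funext p
      exact (hasDerivAt_K_comp hκ Q hw 2 β p.2.2 c (fun v => dil α β (p.1, p.2.1, v))
        (fun v => by simp [dil, basis]; ring)).deriv
    rw [Function.iterate_succ_apply, this, ih]
    simp only [Function.iterate_succ_apply, pow_succ', mul_assoc]

/-! ### Rescaling -/

/-- The rescaled symbol is `e^P`. -/
theorem Ghat2_dil (A κ r ρ σ β ξ η ζ : ℝ) (hβ : r * β ^ 2 = 1) (hρ : ρ = A * r ^ 2 * σ) :
    Ghat2 A κ (r ^ 2) (β * σ * ξ) (β * η) (β * ζ) = E κ 1 (r, ρ, σ) (ξ, η, ζ) := by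
  rw [Ghat2, E, map_one, one_mul]
  congr 1
  set a : ℝ := (β * σ * ξ) ^ 2 + (β * ζ) ^ 2 with ha
  set e : ℝ := β * η with he
  set m : ℝ := A * (β * σ * ξ) with hm
  -- Antiderivatives of `v` and `v²`, where `v s = a + (e + m s)²`.
  set F : ℝ → ℝ := fun s => a * s + (e ^ 2 * s + e * m * s ^ 2 + m ^ 2 * s ^ 3 / 3) with hF
  set H : ℝ → ℝ := fun s => a ^ 2 * s +
    2 * a * (e ^ 2 * s + e * m * s ^ 2 + m ^ 2 * s ^ 3 / 3) +
    (e ^ 4 * s + 2 * e ^ 3 * m * s ^ 2 + 2 * e ^ 2 * m ^ 2 * s ^ 3 + e * m ^ 3 * s ^ 4 +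
      m ^ 4 * s ^ 5 / 5) with hH
  have key : ∀ s : ℝ, HasDerivAt (fun s => F s - κ * s - 4 * H s)
      (vA A (β * σ * ξ) e (β * ζ) s - κ - 4 * vA A (β * σ * ξ) e (β * ζ) s ^ 2) s := by
    intro s
    have d1 := hasDerivAt_id s
    have d2 := hasDerivAt_pow 2 s
    have d3 := hasDerivAt_pow 3 s
    have d4 := hasDerivAt_pow 4 s
    have d5 := hasDerivAt_pow 5 s
    have dq := ((d1.const_mul (e ^ 2)).add (d2.const_mul (e * m))).add
      ((d3.const_mul (m ^ 2)).div_const 3)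
    have dF := (d1.const_mul a).add dq
    have dH := ((d1.const_mul (a ^ 2)).add (dq.const_mul (2 * a))).add
      (((((d1.const_mul (e ^ 4)).add (d2.const_mul (2 * e ^ 3 * m))).add
        (d3.const_mul (2 * e ^ 2 * m ^ 2))).add (d4.const_mul (e * m ^ 3))).add
        ((d5.const_mul (m ^ 4)).div_const 5))
    refine ((dF.sub (d1.const_mul κ)).sub (dH.const_mul 4)).congr_deriv ?_
    have hv : vA A (β * σ * ξ) e (β * ζ) s = a + (e + m * s) ^ 2 := by
      rw [vA, ha, hm]; ring
    rw [hv]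
    push_cast
    ring
  have hcont : Continuous fun s =>
      vA A (β * σ * ξ) e (β * ζ) s - κ - 4 * vA A (β * σ * ξ) e (β * ζ) s ^ 2 := by
    unfold vA; fun_prop
  rw [intervalIntegral.integral_eq_sub_of_hasDerivAt (fun s _ => key s)
    (hcont.intervalIntegrable _ _)]
  have eQ1 : eval (env (r, ρ, σ) (ξ, η, ζ)) Q1 =
      σ ^ 2 * ξ ^ 2 + ζ ^ 2 + (η ^ 2 + η * (ρ * ξ) + 1 / 3 * (ρ * ξ) ^ 2) := by
    simp [Q1, env]
  have eQ2 : eval (env (r, ρ, σ) (ξ, η, ζ)) Q2 =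
      (σ ^ 2 * ξ ^ 2 + ζ ^ 2) ^ 2 +
        2 * (σ ^ 2 * ξ ^ 2 + ζ ^ 2) * (η ^ 2 + η * (ρ * ξ) + 1 / 3 * (ρ * ξ) ^ 2) +
        (η ^ 4 + 2 * η ^ 3 * (ρ * ξ) + 2 * η ^ 2 * (ρ * ξ) ^ 2 + η * (ρ * ξ) ^ 3 +
          1 / 5 * (ρ * ξ) ^ 4) := by
    simp [Q2, env]
  have eP : eval (env (r, ρ, σ) (ξ, η, ζ)) (P κ) =
      -(κ * r ^ 2) + r * eval (env (r, ρ, σ) (ξ, η, ζ)) Q1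
        - 4 * eval (env (r, ρ, σ) (ξ, η, ζ)) Q2 := by
    simp [P, env]
  have eF : F (r ^ 2) - F 0 = r ^ 2 * β ^ 2 * eval (env (r, ρ, σ) (ξ, η, ζ)) Q1 := by
    rw [eQ1, hF, ha, he, hm, hρ]; ring
  have eH : H (r ^ 2) - H 0 = r ^ 2 * β ^ 4 * eval (env (r, ρ, σ) (ξ, η, ζ)) Q2 := by
    rw [eQ2, hH, ha, he, hm, hρ]; ring
  rw [eP]
  linear_combination eF - 4 * eH + (r * eval (env (r, ρ, σ) (ξ, η, ζ)) Q1 -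
    4 * eval (env (r, ρ, σ) (ξ, η, ζ)) Q2 * (r * β ^ 2 + 1)) * hβ

theorem volume_eq_smul_map_dil {α β : ℝ} (hα : 0 < α) (hβ : 0 < β) :
    (volume : Measure (ℝ × ℝ × ℝ)) =
      ENNReal.ofReal (α * β ^ 2) • Measure.map (dil α β) volume := by
  have h1 := Real.smul_map_volume_mul_left hα.ne'
  have h2 := Real.smul_map_volume_mul_left hβ.ne'
  rw [abs_of_pos hα] at h1
  rw [abs_of_pos hβ] at h2
  have e : dil α β = Prod.map (α * ·) (Prod.map (β * ·) (β * ·)) := rfl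
  have hv : (volume : Measure (ℝ × ℝ × ℝ)) =
      (volume : Measure ℝ).prod ((volume : Measure ℝ).prod volume) := rfl
  rw [e, hv, ← Measure.map_prod_map _ _ (by fun_prop) (by fun_prop),
    ← Measure.map_prod_map _ _ (by fun_prop) (by fun_prop)]
  calc (volume : Measure ℝ).prod ((volume : Measure ℝ).prod (volume : Measure ℝ))
      = (ENNReal.ofReal α • Measure.map (α * ·) volume).prod
          ((ENNReal.ofReal β • Measure.map (β * ·) volume).prod
            (ENNReal.ofReal β • Measure.map (β * ·) volume)) := by rw [h1, h2]
    _ = _ := by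
      simp only [Measure.prod_smul_left, Measure.prod_smul_right, smul_smul]
      rw [← ENNReal.ofReal_mul hβ.le, ← ENNReal.ofReal_mul (by positivity)]
      congr 2
      ring

theorem integral_dil {α β : ℝ} (hα : 0 < α) (hβ : 0 < β) (f : ℝ × ℝ × ℝ → ℂ) :
    ∫ q, f q = (α * β ^ 2 : ℝ) * ∫ q, f (dil α β q) := by
  have hemb : MeasurableEmbedding (dil α β) := by
    have : Continuous (dil α β) := by unfold dil; fun_prop
    refine this.measurableEmbedding fun p q h => ?_
    simp only [dil, Prod.mk.injEq, mul_right_inj' hα.ne', mul_right_inj' hβ.ne'] at h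
    exact Prod.ext h.1 (Prod.ext h.2.1 h.2.2)
  conv_lhs => rw [volume_eq_smul_map_dil hα hβ]
  rw [integral_smul_measure, hemb.integral_map, ENNReal.toReal_ofReal (by positivity),
    Complex.real_smul]

theorem G2_eq {A r ρ σ β : ℝ} (hβ0 : 0 < β) (hσ : 0 < σ) (hβ : r * β ^ 2 = 1)
    (hρ : ρ = A * r ^ 2 * σ) (p : ℝ × ℝ × ℝ) :
    G2 A κ (r ^ 2) p.1 p.2.1 p.2.2 =
      (β * σ * β ^ 2 : ℝ) * K κ 1 (r, ρ, σ) (dil (β * σ) β p) := by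
  rw [G2, integral_dil (mul_pos hβ0 hσ) hβ0, K]
  congr 2
  funext q
  rw [← Ghat2_dil A κ r ρ σ β q.1 q.2.1 q.2.2 hβ hρ, osc]
  simp only [dil]
  congr 4
  ring

end GreenKernel

/-- For every integer `N ≥ 1` and nonnegative integers `k₁, k₂, k₃` with
`k = k₁ + k₂ + k₃ ≤ 6` there is `C > 0` such that for all `t > 0` and `(x, y, z) ∈ ℝ³`:
`|∂_x^{k₁} ∂_y^{k₂} ∂_z^{k₃} G₂(t,x,y,z)| ≤ C e^{-εt} t^{-3/4 - k/4} (1+(At)⁴)^{-1/4 - k₁/4}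
  (1 + x²/(t^{1/2}(1+(At)⁴)^{1/2}) + (y²+z²)/t^{1/2})^{-N}`. -/
theorem stmt_11 (A κ ε : ℝ) (hA : 0 < A) (hκ0 : 0 < κ) (hε : 0 < ε)
    (hκ : 1 / 16 + ε < κ) (N : ℕ) (hN : 1 ≤ N) (k₁ k₂ k₃ : ℕ)
    (hk : k₁ + k₂ + k₃ ≤ 6) :
    ∃ C : ℝ, 0 < C ∧ ∀ t x y z : ℝ, 0 < t →
      ‖pD k₁ k₂ k₃ (fun p : ℝ × ℝ × ℝ => G2 A κ t p.1 p.2.1 p.2.2) (x, y, z)‖ ≤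
        C * Real.exp (-ε * t) * t ^ (-(3:ℝ)/4 - (k₁ + k₂ + k₃ : ℝ)/4) *
          (1 + (A * t) ^ 4) ^ (-(1:ℝ)/4 - (k₁ : ℝ)/4) *
          (1 + x ^ 2 / (t ^ ((1:ℝ)/2) * (1 + (A * t) ^ 4) ^ ((1:ℝ)/2)) +
            (y ^ 2 + z ^ 2) / t ^ ((1:ℝ)/2)) ^ (-(N : ℝ)) := by

  obtain ⟨C, hC, hK⟩ := GreenKernel.exists_norm_K_decay hκ
    ((MvPolynomial.X (GreenKernel.idx 0) * ·)^[k₁] ((MvPolynomial.X (GreenKernel.idx 1) * ·)^[k₂]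
      ((MvPolynomial.X (GreenKernel.idx 2) * ·)^[k₃] 1))) N
  refine ⟨C, hC, fun t x y z ht => ?_⟩
  set b : ℝ := 1 + (A * t) ^ 4 with hb
  have hb0 : 0 < b := by positivity
  -- The scalings: `η, ζ` live at scale `β = t^{-1/4}` and `ξ` at scale `βσ`.
  obtain ⟨r, hr⟩ : ∃ r : ℝ, r = t ^ ((1 : ℝ) / 2) := ⟨_, rfl⟩
  obtain ⟨β, hβ⟩ : ∃ β : ℝ, β = t ^ (-(1 : ℝ) / 4) := ⟨_, rfl⟩
  obtain ⟨σ, hσ⟩ : ∃ σ : ℝ, σ = b ^ (-(1 : ℝ) / 4) := ⟨_, rfl⟩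
  have hr0 : 0 < r := hr ▸ Real.rpow_pos_of_pos ht _
  have hβ0 : 0 < β := hβ ▸ Real.rpow_pos_of_pos ht _
  have hσ0 : 0 < σ := hσ ▸ Real.rpow_pos_of_pos hb0 _
  have hβn : ∀ n : ℕ, β ^ n = t ^ (-(n : ℝ) / 4) := fun n => by
    rw [hβ, ← Real.rpow_natCast, ← Real.rpow_mul ht.le]; congr 1; ring
  have hσn : ∀ n : ℕ, σ ^ n = b ^ (-(n : ℝ) / 4) := fun n => by
    rw [hσ, ← Real.rpow_natCast, ← Real.rpow_mul hb0.le]; congr 1; ring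
  have hr2 : r ^ 2 = t := by
    rw [hr, ← Real.rpow_natCast, ← Real.rpow_mul ht.le]; norm_num
  have hβ2 : β ^ 2 = r⁻¹ := by
    rw [hβn, hr, ← Real.rpow_neg ht.le]; norm_num
  have hσ2 : σ ^ 2 = (b ^ ((1 : ℝ) / 2))⁻¹ := by
    rw [hσn, ← Real.rpow_neg hb0.le]; norm_num
  have hσ4 : σ ^ 4 = b⁻¹ := by
    rw [hσn, ← Real.rpow_neg_one]; norm_num
  have hpar : GreenKernel.Par (r, A * t * σ, σ) := by
    refine ⟨hr0.le, by positivity, hσ0.le, ?_⟩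
    simp only [mul_pow _ σ, hσ4]
    field_simp
    rw [hb]; ring
  have hG : (fun p : ℝ × ℝ × ℝ => G2 A κ t p.1 p.2.1 p.2.2) = fun p =>
      ((β * σ * β ^ 2 : ℝ) : ℂ) * GreenKernel.K κ 1 (r, A * t * σ, σ)
        (GreenKernel.dil (β * σ) β p) := by
    funext p
    rw [← hr2]
    exact GreenKernel.G2_eq hβ0 hσ0 (by rw [hβ2, mul_inv_cancel₀ hr0.ne']) rfl p
  rw [pD, hG, GreenKernel.iterate_pdz hκ _ hpar, GreenKernel.iterate_pdy hκ _ hpar,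
    GreenKernel.iterate_pdx hκ _ hpar]
  have hKx := hK _ hpar (β * σ * x) (β * y) (β * z)
  simp only [hr2] at hKx
  have e1 : t ^ (-(3 : ℝ) / 4 - (k₁ + k₂ + k₃ : ℝ) / 4) = β ^ (3 + (k₁ + k₂ + k₃)) := by
    rw [hβn]; congr 1; push_cast; ring
  have e2 : b ^ (-(1 : ℝ) / 4 - (k₁ : ℝ) / 4) = σ ^ (1 + k₁) := by
    rw [hσn]; congr 1; push_cast; ring
  have e3 : 1 + x ^ 2 / (r * b ^ ((1 : ℝ) / 2)) + (y ^ 2 + z ^ 2) / r =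
      1 + (β * σ * x) ^ 2 + ((β * y) ^ 2 + (β * z) ^ 2) := by
    rw [mul_pow, mul_pow β σ, mul_pow, mul_pow, hβ2, hσ2, div_eq_mul_inv, div_eq_mul_inv,
      mul_inv]
    ring
  rw [e1, e2, ← hr, e3]
  simp only [norm_mul, norm_pow, Complex.norm_real, Complex.norm_I, mul_one, Real.norm_eq_abs,
    abs_of_pos hβ0, abs_of_pos hσ0]
  refine (mul_le_mul_of_nonneg_left hKx (by positivity)).trans_eq ?_
  ring
end

section
/- Let 1 ≤ p < 2 and let k₁, k₂, k₃ be nonnegative integers with k = k₁ + k₂ + k₃ ≤ 6. Then there exists a constant C > 0 such that for all t > 0: ‖ ∂_x^{k₁} ∂_y^{k₂} ∂_z^{k₃} G₂(t, ·, ·, ·) ‖_{L^p(ℝ³)} ≤ C e^{−ε t} t^{−(3/4)(1 − 1/p) − k/4} (1 + (A t)⁴)^{−(1/4)(1 − 1/p) − k₁/4}. -/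
/-!
The kernel `∂^k G₂` is the Fourier integral of `(iξ)^k₁ (iη)^k₂ (iζ)^k₃ exp Φ(ξ, η, ζ)`, where `Φ`,
the time integral of the symbol `v - κ - 4v²`, is a quartic polynomial and so extends to `ℂ³`. Its
natural length scales are `a = (t (1 + (A t)⁴))^{1/4}` in `x` and `b = t^{1/4}` in `y` and `z`.

* On the tube `|Im ξ| ≤ 2/a`, `|Im η|, |Im ζ| ≤ 2/b`, the imaginary part of the sheared frequency
  `(ξ, η + A ξ s, ζ)` is `O(t^{-1/4})` for `0 ≤ s ≤ t`, because `b (1 + A t) ≤ 2 a`. Together with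
  `max (v - 4v²) = 1/16 < κ - ε` and `∫₀ᵗ (η + A ξ s)⁴ ds ≥ t (η⁴ + (A ξ t)⁴) / 200` this gives
  `Re Φ ≤ C - ε t - c ((aξ)⁴ + (bη)⁴ + (bζ)⁴)` with `C, c` independent of `t` (`re_Phi_le`). Hence
  the multiplier is at most `C e^{-εt} a^{-k₁} b^{-k₂-k₃}` times a product of Cauchy weights
  `1 / (1 + u²)` in the variables `u = aξ, bη, bζ` (`exists_mult_bound`).
* Moving the contour to imaginary parts `±1/a, ±1/b, ±1/b` therefore gives
  `|∂^k G₂(X)| ≤ C e^{-εt} a^{-k₁-1} b^{-k₂-k₃-2} exp (-|x|/a - |y|/b - |z|/b)`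
  (`fourier_exp_decay`).
* The `L^p` norm of the exponential is at most `(8 a b²)^{1/p}` (`eLpNorm_le_of_exp_decay`), and the
  resulting powers of `a` and `b` are exactly those claimed (`scale_identity`).
-/


open MeasureTheory
open scoped ENNReal

/-! ### Contour shift and exponential decay of Fourier integrals -/

/-- Differentiation under the integral sign for a family of entire functions that is dominated,
locally in the parameter, by an integrable function: Cauchy's estimate bounds the derivative. -/
theorem differentiableAt_integral_of_dominated {α : Type*} [MeasurableSpace α] {μ : Measure α}
    (f : ℂ → α → ℂ) (bound : α → ℝ) (w₀ : ℂ) (r : ℝ) (hr : 0 < r)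
    (hd : ∀ q, Differentiable ℂ (fun w => f w q))
    (hm : ∀ w, AEStronglyMeasurable (f w) μ)
    (hm' : AEStronglyMeasurable (fun q => deriv (fun w => f w q) w₀) μ)
    (hb : ∀ w ∈ Metric.ball w₀ (2 * r), ∀ q, ‖f w q‖ ≤ bound q)
    (hi : Integrable bound μ) :
    DifferentiableAt ℂ (fun w => ∫ q, f w q ∂μ) w₀ := by
  have h0 : w₀ ∈ Metric.ball w₀ (2 * r) := Metric.mem_ball_self (by positivity)
  refine (hasDerivAt_integral_of_dominated_loc_of_deriv_le (bound := fun q => bound q / (r / 2))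
    (F' := fun w q => deriv (fun w => f w q) w) (Metric.ball_mem_nhds w₀ hr)
    (Filter.Eventually.of_forall hm) ?_ hm' ?_ (hi.div_const _) ?_).2.differentiableAt
  · exact hi.mono' (hm w₀) (Filter.Eventually.of_forall fun q => hb w₀ h0 q)
  · refine Filter.Eventually.of_forall fun q w hw => ?_
    refine Complex.norm_deriv_le_of_forall_mem_sphere_norm_le (half_pos hr)
      (hd q).diffContOnCl fun z hz => hb z ?_ q
    rw [Metric.mem_ball] at hw ⊢
    rw [Metric.mem_sphere] at hz
    linarith [dist_triangle z w w₀]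
  · exact Filter.Eventually.of_forall fun q w _ => (hd q w).hasDerivAt

/-- The product Cauchy weight on `ℝ³` adapted to the scales `1/a, 1/b, 1/c`. -/
noncomputable def cauchyW (a b c : ℝ) (q : ℝ × ℝ × ℝ) : ℝ :=
  (1 + (a * q.1) ^ 2)⁻¹ * ((1 + (b * q.2.1) ^ 2)⁻¹ * (1 + (c * q.2.2) ^ 2)⁻¹)

/-- The point `q + i g` of `ℂ³`. -/
noncomputable def cpt (q g : ℝ × ℝ × ℝ) : ℂ × ℂ × ℂ :=
  ((q.1 : ℂ) + g.1 * Complex.I, (q.2.1 : ℂ) + g.2.1 * Complex.I, (q.2.2 : ℂ) + g.2.2 * Complex.I)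

theorem cauchyW_pos (a b c : ℝ) (q : ℝ × ℝ × ℝ) : 0 < cauchyW a b c q := by
  unfold cauchyW; positivity

theorem integrable_cauchyW {a b c : ℝ} (ha : 0 < a) (hb : 0 < b) (hc : 0 < c) :
    Integrable (cauchyW a b c) :=
  (integrable_inv_one_add_sq.comp_mul_left' ha.ne').mul_prod
    ((integrable_inv_one_add_sq.comp_mul_left' hb.ne').mul_prod
      (integrable_inv_one_add_sq.comp_mul_left' hc.ne'))

theorem integral_cauchyW {a b c : ℝ} (ha : 0 < a) (hb : 0 < b) (hc : 0 < c) :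
    ∫ q, cauchyW a b c q = Real.pi ^ 3 / (a * b * c) := by
  have key : ∀ d : ℝ, 0 < d → ∫ x : ℝ, (1 + (d * x) ^ 2)⁻¹ = Real.pi / d := fun d hd => by
    rw [Measure.integral_comp_mul_left (fun x : ℝ => (1 + x ^ 2)⁻¹) d,
      integral_univ_inv_one_add_sq, abs_of_pos (inv_pos.2 hd), smul_eq_mul]
    field_simp
  unfold cauchyW
  rw [Measure.volume_eq_prod, integral_prod_mul (fun x : ℝ => (1 + (a * x) ^ 2)⁻¹)
    (fun y : ℝ × ℝ => (1 + (b * y.1) ^ 2)⁻¹ * (1 + (c * y.2) ^ 2)⁻¹), Measure.volume_eq_prod,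
    integral_prod_mul (fun x : ℝ => (1 + (b * x) ^ 2)⁻¹) (fun x : ℝ => (1 + (c * x) ^ 2)⁻¹),
    key a ha, key b hb, key c hc]
  field_simp

/-- Peetre's inequality for the one-dimensional Cauchy weight. -/
theorem inv_one_add_sq_shift (x u U : ℝ) (hu : |u| ≤ U) :
    (1 + (x + u) ^ 2)⁻¹ ≤ 2 * (1 + U ^ 2) * (1 + x ^ 2)⁻¹ := by
  have h1 : u ^ 2 ≤ U ^ 2 := sq_le_sq' (by linarith [neg_abs_le u]) (by linarith [le_abs_self u])
  rw [← div_eq_mul_inv, inv_eq_one_div, div_le_div_iff₀ (by positivity) (by positivity)]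
  nlinarith [sq_nonneg (x + 2 * u), sq_nonneg (u * (x + u)), sq_nonneg (x + u),
    mul_nonneg (sub_nonneg.2 h1) (sq_nonneg (x + u))]

/-- Real translations comparable to the scales change the weight by a bounded factor only. -/
theorem cauchyW_shift {a b c : ℝ} (ha : 0 < a) (hb : 0 < b) (hc : 0 < c) (q h : ℝ × ℝ × ℝ)
    (h1 : |h.1| = a⁻¹) (h2 : |h.2.1| = b⁻¹) (h3 : |h.2.2| = c⁻¹) (u U : ℝ) (hu : |u| ≤ U) :
    cauchyW a b c (q + u • h) ≤ (2 * (1 + U ^ 2)) ^ 3 * cauchyW a b c q := by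
  have key : ∀ d : ℝ, 0 < d → ∀ x y : ℝ, |y| = d⁻¹ → (1 + (d * (x + u * y)) ^ 2)⁻¹ ≤
      2 * (1 + U ^ 2) * (1 + (d * x) ^ 2)⁻¹ := fun d hd x y hy => by
    have : d * (x + u * y) = d * x + d * (u * y) := by ring
    rw [this]
    refine inv_one_add_sq_shift _ _ _ ?_
    rw [abs_mul, abs_mul, hy, abs_of_pos hd]
    field_simp
    exact hu
  unfold cauchyW
  calc _ ≤ (2 * (1 + U ^ 2) * (1 + (a * q.1) ^ 2)⁻¹) * ((2 * (1 + U ^ 2) * (1 + (b * q.2.1) ^ 2)⁻¹)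
        * (2 * (1 + U ^ 2) * (1 + (c * q.2.2) ^ 2)⁻¹)) := by
        gcongr
        · exact key a ha _ _ h1
        · exact key b hb _ _ h2
        · exact key c hc _ _ h3
    _ = _ := by ring

theorem continuous_cpt (g : ℝ × ℝ × ℝ) : Continuous fun q => cpt q g := by
  unfold cpt; fun_prop

/-- Contour shift in `ℝ³`. The integral `∫ F (q + w h) dq` is holomorphic in `w` on the strip
`|Im w| < 2`, and constant for real `w` by translation invariance, hence it takes the same value
at `w = 0` and `w = i`. -/
theorem contourShift {a b c M : ℝ} (ha : 0 < a) (hb : 0 < b) (hc : 0 < c)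
    (h : ℝ × ℝ × ℝ) (h1 : |h.1| = a⁻¹) (h2 : |h.2.1| = b⁻¹) (h3 : |h.2.2| = c⁻¹)
    (F : ℂ × ℂ × ℂ → ℂ) (hF : ContDiff ℂ 1 F)
    (hbd : ∀ q g : ℝ × ℝ × ℝ, |g.1| ≤ 2 / a → |g.2.1| ≤ 2 / b → |g.2.2| ≤ 2 / c →
      ‖F (cpt q g)‖ ≤ M * cauchyW a b c q) :
    ∫ q, F (cpt q 0) = ∫ q, F (cpt q h) := by
  have hM : 0 ≤ M := by
    have := (norm_nonneg _).trans (hbd 0 0 (by simp; positivity) (by simp; positivity)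
      (by simp; positivity))
    exact nonneg_of_mul_nonneg_left this (cauchyW_pos a b c 0)
  let hC : ℂ × ℂ × ℂ := (h.1, h.2.1, h.2.2)
  let H : ℂ → ℂ := fun w => ∫ q, F (cpt q 0 + w • hC)
  have hre : ∀ (w : ℂ) (q : ℝ × ℝ × ℝ), cpt q 0 + w • hC = cpt (q + w.re • h) (w.im • h) := by
    intro w q
    refine Prod.ext ?_ (Prod.ext ?_ ?_) <;> simp [cpt, hC] <;> apply Complex.ext <;> simp
  have hbd' : ∀ (w : ℂ) (q : ℝ × ℝ × ℝ) (U : ℝ), |w.im| ≤ 2 → |w.re| ≤ U →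
      ‖F (cpt q 0 + w • hC)‖ ≤ M * ((2 * (1 + U ^ 2)) ^ 3 * cauchyW a b c q) := by
    intro w q U him hU
    rw [hre]
    refine (hbd _ _ ?_ ?_ ?_).trans
      (mul_le_mul_of_nonneg_left (cauchyW_shift ha hb hc q h h1 h2 h3 _ _ hU) hM)
    · simp only [Prod.smul_fst, smul_eq_mul, abs_mul, h1, div_eq_mul_inv]; gcongr
    · simp only [Prod.smul_fst, Prod.smul_snd, smul_eq_mul, abs_mul, h2, div_eq_mul_inv]; gcongr
    · simp only [Prod.smul_snd, smul_eq_mul, abs_mul, h3, div_eq_mul_inv]; gcongr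
  let S : Set ℂ := {w | |w.im| < 2}
  have hSo : IsOpen S := isOpen_lt (by fun_prop) (by fun_prop)
  have hSc : Convex ℝ S := by
    have : S = Complex.imLm ⁻¹' (Set.Ioo (-2) 2) := by
      ext w; simp [S, abs_lt]
    rw [this]
    exact (convex_Ioo _ _).linear_preimage _
  have hdiff : DifferentiableOn ℂ H S := by
    intro w₀ hw₀
    obtain ⟨R, hR, hball⟩ := Metric.isOpen_iff.1 hSo w₀ hw₀
    refine (differentiableAt_integral_of_dominated (fun w q => F (cpt q 0 + w • hC))
      (fun q => M * ((2 * (1 + (|w₀.re| + R) ^ 2)) ^ 3 * cauchyW a b c q)) w₀ (R / 2)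
      (by positivity) ?_ ?_ ?_ ?_ ?_).differentiableWithinAt
    · intro q
      exact (hF.differentiable one_ne_zero).comp (by fun_prop)
    · intro w
      exact (hF.continuous.comp ((continuous_cpt 0).add continuous_const)).aestronglyMeasurable
    · have : (fun q => deriv (fun w : ℂ => F (cpt q 0 + w • hC)) w₀) =
          fun q => fderiv ℂ F (cpt q 0 + w₀ • hC) hC := by
        funext q
        have e1 : HasDerivAt (fun w : ℂ => cpt q 0 + w • hC) hC w₀ := by
          simpa using ((hasDerivAt_id w₀).smul_const hC).const_add (cpt q 0)
        exact ((hF.differentiable one_ne_zero _).hasFDerivAt.comp_hasDerivAt w₀ e1).deriv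
      rw [this]
      have hc1 := hF.continuous_fderiv one_ne_zero
      exact ((hc1.comp ((continuous_cpt 0).add continuous_const)).clm_apply
        continuous_const).aestronglyMeasurable
    · intro w hw q
      rw [mul_div_cancel₀ _ two_ne_zero] at hw
      refine hbd' w q _ (le_of_lt (hball hw)) ?_
      have := (Complex.abs_re_le_norm (w - w₀)).trans (mem_ball_iff_norm.1 hw).le
      rw [Complex.sub_re] at this
      have h4 := abs_sub_abs_le_abs_sub w.re w₀.re
      linarith
    · exact ((integrable_cauchyW ha hb hc).const_mul _).const_mul _
  have hreal : ∀ u : ℝ, H u = H 0 := by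
    intro u
    have e : ∀ v : ℝ, H v = ∫ q, F (cpt (q + v • h) 0) := fun v => by
      refine integral_congr_ae (Filter.Eventually.of_forall fun q => ?_)
      simp only [hre]; simp
    have e0 := e 0
    rw [Complex.ofReal_zero] at e0
    rw [e, e0]
    have : (volume : Measure (ℝ × ℝ × ℝ)).IsAddHaarMeasure :=
      Measure.prod.instIsAddHaarMeasure (volume : Measure ℝ) (volume : Measure (ℝ × ℝ))
    have := integral_add_left_eq_self (μ := (volume : Measure (ℝ × ℝ × ℝ)))
      (fun q => F (cpt q 0)) (u • h)
    simpa [add_comm] using this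
  have hzero : (0 : ℂ) ∈ S := by simp [S]
  have hI : Complex.I ∈ S := by simp [S]
  have heq : Set.EqOn H (fun _ => H 0) S := by
    refine (hdiff.analyticOnNhd hSo).eqOn_of_preconnected_of_frequently_eq
      analyticOnNhd_const hSc.isPreconnected hzero ?_
    have ht : Filter.Tendsto (fun u : ℝ => (u : ℂ)) (nhdsWithin 0 {0}ᶜ) (nhdsWithin 0 {0}ᶜ) := by
      refine tendsto_nhdsWithin_iff.2 ⟨?_, ?_⟩
      · exact (Complex.continuous_ofReal.tendsto' 0 0 (by simp)).mono_left nhdsWithin_le_nhds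
      · filter_upwards [self_mem_nhdsWithin] with u hu
        simpa using hu
    exact ht.frequently (Filter.Eventually.frequently (Filter.Eventually.of_forall hreal))
  have := heq hI
  simp only [H, hre] at this
  simpa using this.symm

/-- Paley–Wiener type estimate: a Fourier integral of an entire function dominated on a tube by a
Cauchy weight decays exponentially at the scales of the tube. -/
theorem fourier_exp_decay {a b c M : ℝ} (ha : 0 < a) (hb : 0 < b) (hc : 0 < c)
    (F : ℂ × ℂ × ℂ → ℂ) (hF : ContDiff ℂ 1 F)
    (hbd : ∀ q g : ℝ × ℝ × ℝ, |g.1| ≤ 2 / a → |g.2.1| ≤ 2 / b → |g.2.2| ≤ 2 / c →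
      ‖F (cpt q g)‖ ≤ M * cauchyW a b c q) (X : ℝ × ℝ × ℝ) :
    ‖∫ q : ℝ × ℝ × ℝ, Complex.exp (Complex.I *
        ((X.1 * q.1 + X.2.1 * q.2.1 + X.2.2 * q.2.2 : ℝ) : ℂ)) * F (cpt q 0)‖ ≤
      M * (Real.pi ^ 3 / (a * b * c)) *
        Real.exp (-(|X.1| / a) - |X.2.1| / b - |X.2.2| / c) := by
  have hM : 0 ≤ M := by
    have := (norm_nonneg _).trans (hbd 0 0 (by simp; positivity) (by simp; positivity)
      (by simp; positivity))
    exact nonneg_of_mul_nonneg_left this (cauchyW_pos a b c 0)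
  let E : ℂ × ℂ × ℂ → ℂ := fun Z =>
    Complex.exp (Complex.I * (X.1 * Z.1 + X.2.1 * Z.2.1 + X.2.2 * Z.2.2)) * F Z
  have hE : ContDiff ℂ 1 E := by
    refine ContDiff.mul ?_ hF
    refine Complex.contDiff_exp.comp ?_
    fun_prop
  have hEn : ∀ q g : ℝ × ℝ × ℝ, ‖E (cpt q g)‖ =
      Real.exp (-(X.1 * g.1 + X.2.1 * g.2.1 + X.2.2 * g.2.2)) * ‖F (cpt q g)‖ := by
    intro q g
    simp only [E, norm_mul, Complex.norm_exp, cpt]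
    congr 2
    simp
    try ring
  have hsg : ∀ x d : ℝ, 0 < d → ∃ y : ℝ, |y| = d⁻¹ ∧ x * y = |x| / d := by
    intro x d hd
    rcases le_total 0 x with hx | hx
    · exact ⟨d⁻¹, abs_of_pos (inv_pos.2 hd), by rw [abs_of_nonneg hx, div_eq_mul_inv]⟩
    · exact ⟨-d⁻¹, by rw [abs_neg, abs_of_pos (inv_pos.2 hd)],
        by rw [abs_of_nonpos hx, div_eq_mul_inv]; ring⟩
  obtain ⟨y1, h1, e1⟩ := hsg X.1 a ha
  obtain ⟨y2, h2, e2⟩ := hsg X.2.1 b hb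
  obtain ⟨y3, h3, e3⟩ := hsg X.2.2 c hc
  have hle : ∀ x y d : ℝ, 0 < d → |y| ≤ 2 / d → -(x * y) ≤ 2 * (|x| / d) := by
    intro x y d hd hy
    calc -(x * y) ≤ |x * y| := neg_le_abs _
      _ = |x| * |y| := abs_mul _ _
      _ ≤ |x| * (2 / d) := by gcongr
      _ = _ := by ring
  have hshift := contourShift (M := Real.exp (2 * (|X.1| / a) + 2 * (|X.2.1| / b) +
    2 * (|X.2.2| / c)) * M) ha hb hc (y1, y2, y3) h1 h2 h3 E hE (by
      intro q g g1 g2 g3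
      rw [hEn, mul_assoc]
      refine mul_le_mul (Real.exp_le_exp.2 ?_) (hbd q g g1 g2 g3) (norm_nonneg _)
        (Real.exp_pos _).le
      linarith [hle X.1 g.1 a ha g1, hle X.2.1 g.2.1 b hb g2, hle X.2.2 g.2.2 c hc g3])
  have hstart : ∀ q : ℝ × ℝ × ℝ, E (cpt q 0) = Complex.exp (Complex.I *
        ((X.1 * q.1 + X.2.1 * q.2.1 + X.2.2 * q.2.2 : ℝ) : ℂ)) * F (cpt q 0) := by
    intro q
    simp [E, cpt]
  simp_rw [← hstart]
  rw [hshift]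
  have hhalf : ∀ y d : ℝ, 0 < d → |y| = d⁻¹ → |y| ≤ 2 / d := by
    intro y d hd hy
    rw [hy, inv_eq_one_div]; gcongr; norm_num
  refine (norm_integral_le_of_norm_le (((integrable_cauchyW ha hb hc).const_mul M).const_mul
    (Real.exp (-(|X.1| / a) - |X.2.1| / b - |X.2.2| / c)))
    (Filter.Eventually.of_forall fun q => ?_)).trans_eq ?_
  · rw [hEn]
    refine mul_le_mul (Real.exp_le_exp.2 ?_) (hbd q _ (hhalf _ _ ha h1) (hhalf _ _ hb h2)
      (hhalf _ _ hc h3)) (norm_nonneg _) (Real.exp_pos _).le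
    simp only [e1, e2, e3]
    linarith
  · rw [integral_const_mul, integral_const_mul, integral_cauchyW ha hb hc]
    ring

/-! ### The symbol on a complex tube -/

/-- The exponent `∫₀ᵗ (v - κ - 4v²) ds` as an explicit polynomial in complex frequencies. It is
written out through the coefficients of the powers of `s` in `v(s)`. -/
noncomputable def Phi (A κ t : ℝ) (Z : ℂ × ℂ × ℂ) : ℂ :=
  (Z.1 ^ 2 + Z.2.1 ^ 2 + Z.2.2 ^ 2 - κ - 4 * (Z.1 ^ 2 + Z.2.1 ^ 2 + Z.2.2 ^ 2) ^ 2) * t +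
  (2 * A * Z.1 * Z.2.1 - 8 * (Z.1 ^ 2 + Z.2.1 ^ 2 + Z.2.2 ^ 2) * (2 * A * Z.1 * Z.2.1)) *
    (t ^ 2 / 2) +
  ((A * Z.1) ^ 2 - 4 * ((2 * A * Z.1 * Z.2.1) ^ 2 +
    2 * (Z.1 ^ 2 + Z.2.1 ^ 2 + Z.2.2 ^ 2) * (A * Z.1) ^ 2)) * (t ^ 3 / 3) -
  8 * (2 * A * Z.1 * Z.2.1) * (A * Z.1) ^ 2 * (t ^ 4 / 4) -
  4 * ((A * Z.1) ^ 2) ^ 2 * (t ^ 5 / 5)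

theorem Phi_eq_integral (A κ t : ℝ) (Z : ℂ × ℂ × ℂ) :
    Phi A κ t Z = ∫ s in (0:ℝ)..t, ((Z.1 ^ 2 + (Z.2.1 + A * Z.1 * s) ^ 2 + Z.2.2 ^ 2) - κ -
      4 * (Z.1 ^ 2 + (Z.2.1 + A * Z.1 * s) ^ 2 + Z.2.2 ^ 2) ^ 2 : ℂ) := by
  have hd : ∀ s ∈ Set.uIcc (0:ℝ) t, HasDerivAt (fun s : ℝ => Phi A κ s Z)
      ((Z.1 ^ 2 + (Z.2.1 + A * Z.1 * s) ^ 2 + Z.2.2 ^ 2) - κ -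
      4 * (Z.1 ^ 2 + (Z.2.1 + A * Z.1 * s) ^ 2 + Z.2.2 ^ 2) ^ 2 : ℂ) s := by
    intro s _
    have h1 : HasDerivAt (fun s : ℝ => (s : ℂ)) 1 s := Complex.ofRealCLM.hasDerivAt
    have hp := fun n : ℕ => h1.fun_pow n
    unfold Phi
    refine (((((h1.const_mul _).add (((hp 2).div_const 2).const_mul _)).add
      (((hp 3).div_const 3).const_mul _)).sub (((hp 4).div_const 4).const_mul _)).sub
      (((hp 5).div_const 5).const_mul _)).congr_deriv ?_
    push_cast
    ring
  rw [intervalIntegral.integral_eq_sub_of_hasDerivAt hd]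
  · simp [Phi]
  · exact (by fun_prop : Continuous _).intervalIntegrable _ _

theorem Ghat2_eq_s12 (A κ t : ℝ) (q : ℝ × ℝ × ℝ) :
    (Ghat2 A κ t q.1 q.2.1 q.2.2 : ℂ) = Complex.exp (Phi A κ t (cpt q 0)) := by
  rw [Ghat2, Complex.ofReal_exp, Phi_eq_integral, ← intervalIntegral.integral_ofReal]
  congr 2
  funext s
  simp [vA, cpt]

/-- Pointwise coercivity of the symbol at the complex frequency `w + i g`, `w, g ∈ ℝ³`. With
`θ = 2 - 1/(8(κ-ε))`, the polynomial `ε - κ + r - (4 - 2θ) r²` is `-(r - 2(κ-ε))²/(4(κ-ε))`. -/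
theorem re_symbol_le {κ ε τ : ℝ} (hκ : 1 / 16 + ε < κ) (hτ : 0 < τ) (w1 w2 w3 g1 g2 g3 : ℝ)
    (hg : (g1 ^ 2 + g2 ^ 2 + g3 ^ 2) ^ 2 * τ ≤ 576) :
    (((w1 + g1 * Complex.I) ^ 2 + (w2 + g2 * Complex.I) ^ 2 + (w3 + g3 * Complex.I) ^ 2) - κ -
      4 * ((w1 + g1 * Complex.I) ^ 2 + (w2 + g2 * Complex.I) ^ 2 + (w3 + g3 * Complex.I) ^ 2) ^ 2
      : ℂ).re ≤ -ε + 82944 / ((2 - 1 / (8 * (κ - ε))) * τ) -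
        (2 - 1 / (8 * (κ - ε))) * (w1 ^ 4 + w2 ^ 4 + w3 ^ 4) := by
  have hd0 : 0 < κ - ε := by linarith
  obtain ⟨d, hd⟩ : ∃ d, d = κ - ε := ⟨_, rfl⟩
  rw [← hd] at hd0 ⊢
  have hθ : 0 < 2 - 1 / (8 * d) := by
    rw [sub_pos, div_lt_iff₀ (by positivity)]; linarith
  obtain ⟨θ, hθd⟩ : ∃ θ, θ = 2 - 1 / (8 * d) := ⟨_, rfl⟩
  rw [← hθd] at hθ ⊢
  have hre : (((w1 + g1 * Complex.I) ^ 2 + (w2 + g2 * Complex.I) ^ 2 + (w3 + g3 * Complex.I) ^ 2)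
      - κ - 4 * ((w1 + g1 * Complex.I) ^ 2 + (w2 + g2 * Complex.I) ^ 2 +
      (w3 + g3 * Complex.I) ^ 2) ^ 2 : ℂ).re = (w1 ^ 2 + w2 ^ 2 + w3 ^ 2) -
      (g1 ^ 2 + g2 ^ 2 + g3 ^ 2) - κ - 4 * ((w1 ^ 2 + w2 ^ 2 + w3 ^ 2) -
      (g1 ^ 2 + g2 ^ 2 + g3 ^ 2)) ^ 2 + 16 * (w1 * g1 + w2 * g2 + w3 * g3) ^ 2 := by
    simp [pow_two]
    ring
  rw [hre]
  have hCS : (w1 * g1 + w2 * g2 + w3 * g3) ^ 2 ≤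
      (w1 ^ 2 + w2 ^ 2 + w3 ^ 2) * (g1 ^ 2 + g2 ^ 2 + g3 ^ 2) := by
    nlinarith [sq_nonneg (w1 * g2 - w2 * g1), sq_nonneg (w1 * g3 - w3 * g1),
      sq_nonneg (w2 * g3 - w3 * g2)]
  have hr4 : w1 ^ 4 + w2 ^ 4 + w3 ^ 4 ≤ (w1 ^ 2 + w2 ^ 2 + w3 ^ 2) ^ 2 := by
    nlinarith [mul_nonneg (sq_nonneg w1) (sq_nonneg w2), mul_nonneg (sq_nonneg w1) (sq_nonneg w3),
      mul_nonneg (sq_nonneg w2) (sq_nonneg w3)]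
  obtain ⟨r, hr⟩ : ∃ r, r = w1 ^ 2 + w2 ^ 2 + w3 ^ 2 := ⟨_, rfl⟩
  obtain ⟨G, hG⟩ : ∃ G, G = g1 ^ 2 + g2 ^ 2 + g3 ^ 2 := ⟨_, rfl⟩
  have hG0 : 0 ≤ G := by rw [hG]; positivity
  rw [← hr, ← hG] at hCS ⊢
  rw [← hr] at hr4
  rw [← hG] at hg
  -- completing the square in `r`, the maximum of `v - 4v²` being `1/16`
  have hquad : r - (4 - 2 * θ) * r ^ 2 ≤ d := by
    have e : (4 - 2 * θ) = 1 / (4 * d) := by rw [hθd]; field_simp; ring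
    rw [e]
    have : 0 ≤ (r - 2 * d) ^ 2 / (4 * d) := by positivity
    have e2 : (r - 2 * d) ^ 2 / (4 * d) = 1 / (4 * d) * r ^ 2 - r + d := by field_simp; ring
    linarith
  have hcross : 24 * r * G ≤ θ * r ^ 2 + 82944 / (θ * τ) := by
    have h1 : 24 * r * G ≤ θ * r ^ 2 + 144 * G ^ 2 / θ := by
      have : 0 ≤ (θ * r - 12 * G) ^ 2 / θ := by positivity
      have e2 : (θ * r - 12 * G) ^ 2 / θ = θ * r ^ 2 - 24 * r * G + 144 * G ^ 2 / θ := by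
        field_simp; ring
      linarith
    have h2 : 144 * G ^ 2 / θ ≤ 82944 / (θ * τ) := by
      rw [div_le_div_iff₀ hθ (by positivity)]
      nlinarith
    linarith
  nlinarith [mul_le_mul_of_nonneg_left hr4 hθ.le, sq_nonneg G]

/-- Positive definiteness of the quartic form arising from `∫₀¹ (η + m σ)⁴ dσ`. -/
theorem quartic_lower (η m : ℝ) : (η ^ 4 + m ^ 4) / 200 ≤
    η ^ 4 + 2 * η ^ 3 * m + 2 * η ^ 2 * m ^ 2 + η * m ^ 3 + m ^ 4 / 5 := by
  -- in terms of `e = η + m / 2` the right side is `e⁴ + e² m² / 2 + m⁴ / 80`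
  obtain ⟨e, rfl⟩ : ∃ e, η = e - m / 2 := ⟨η + m / 2, by ring⟩
  nlinarith [sq_nonneg (e ^ 2 - m ^ 2), sq_nonneg (e * m), sq_nonneg (e ^ 2), sq_nonneg (m ^ 2),
    sq_nonneg (e * (e - m)), sq_nonneg (e * (e + m)), sq_nonneg (m * (e + m)),
    sq_nonneg (m * (e - m))]

theorem integral_shear_pow_four (A t ξ η : ℝ) :
    ∫ s in (0:ℝ)..t, (η + A * ξ * s) ^ 4 =
      t * (η ^ 4 + 2 * η ^ 3 * (A * ξ * t) + 2 * η ^ 2 * (A * ξ * t) ^ 2 + η * (A * ξ * t) ^ 3 +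
        (A * ξ * t) ^ 4 / 5) := by
  have hd : ∀ s ∈ Set.uIcc (0:ℝ) t, HasDerivAt (fun s : ℝ => s * (η ^ 4 + 2 * η ^ 3 * (A * ξ * s) +
      2 * η ^ 2 * (A * ξ * s) ^ 2 + η * (A * ξ * s) ^ 3 + (A * ξ * s) ^ 4 / 5))
      ((η + A * ξ * s) ^ 4) s := by
    intro s _
    have e : (fun s : ℝ => s * (η ^ 4 + 2 * η ^ 3 * (A * ξ * s) +
      2 * η ^ 2 * (A * ξ * s) ^ 2 + η * (A * ξ * s) ^ 3 + (A * ξ * s) ^ 4 / 5)) =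
      fun s => η ^ 4 * s + 2 * η ^ 3 * (A * ξ) * s ^ 2 + 2 * η ^ 2 * (A * ξ) ^ 2 * s ^ 3 +
        η * (A * ξ) ^ 3 * s ^ 4 + (A * ξ) ^ 4 / 5 * s ^ 5 := by funext s; ring
    rw [e]
    have hp := fun n : ℕ => hasDerivAt_pow n s
    refine ((((((hasDerivAt_id s).const_mul _).add ((hp 2).const_mul _)).add
      ((hp 3).const_mul _)).add ((hp 4).const_mul _)).add ((hp 5).const_mul _)).congr_deriv ?_
    push_cast
    ring
  rw [intervalIntegral.integral_eq_sub_of_hasDerivAt hd]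
  · simp
  · exact (by fun_prop : Continuous _).intervalIntegrable _ _

/-- Coercivity of the integrated symbol on the tube of widths `2/a, 2/b, 2/b`. The shear carries the
imaginary part `g₁` into the second coordinate as `A g₁ s`, which is still at most `2/b` since
`b A t ≤ a`. -/
theorem re_Phi_le {A κ ε t a b : ℝ} (hA : 0 < A) (hκ : 1 / 16 + ε < κ) (ht : 0 < t)
    (ha : 0 < a) (hb : 0 < b) (ha4 : a ^ 4 = t * (1 + (A * t) ^ 4)) (hb4 : b ^ 4 = t)
    (q g : ℝ × ℝ × ℝ) (hg1 : |g.1| ≤ 2 / a) (hg2 : |g.2.1| ≤ 2 / b) (hg3 : |g.2.2| ≤ 2 / b) :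
    (Phi A κ t (cpt q g)).re ≤ -ε * t + 82944 / (2 - 1 / (8 * (κ - ε))) -
      (2 - 1 / (8 * (κ - ε))) / 200 * ((a * q.1) ^ 4 + (b * q.2.1) ^ 4 + (b * q.2.2) ^ 4) := by
  obtain ⟨ξ, η, ζ⟩ := q
  obtain ⟨g1, g2, g3⟩ := g
  simp only at hg1 hg2 hg3 ⊢
  have hθ : 0 < 2 - 1 / (8 * (κ - ε)) := by
    have : 0 < κ - ε := by linarith
    rw [sub_pos, div_lt_iff₀ (by positivity)]; linarith
  have hba : b ≤ a := by
    rw [← pow_le_pow_iff_left₀ hb.le ha.le four_ne_zero, ha4, hb4]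
    have : 0 ≤ t * (A * t) ^ 4 := by positivity
    linarith
  have hba' : b * (A * t) ≤ a := by
    rw [← pow_le_pow_iff_left₀ (by positivity) ha.le four_ne_zero, ha4, mul_pow, hb4]
    linarith
  have hgs : ∀ s ∈ Set.Icc 0 t, (g1 ^ 2 + (g2 + A * g1 * s) ^ 2 + g3 ^ 2) ^ 2 * t ≤ 576 := by
    intro s hs
    have h1 : |g1| ≤ 2 / b := hg1.trans (by gcongr)
    have h2 : |g2 + A * g1 * s| ≤ 4 / b := by
      have h3 : |A * g1 * s| ≤ 2 / b := by
        rw [abs_mul, abs_mul, abs_of_pos hA, abs_of_nonneg hs.1]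
        calc A * |g1| * s ≤ A * (2 / a) * t := by gcongr; exacts [hs.1, hs.2]
          _ = 2 * (A * t) / a := by ring
          _ ≤ 2 / b := by
            rw [div_le_div_iff₀ ha hb]; nlinarith
      calc _ ≤ |g2| + |A * g1 * s| := abs_add_le _ _
        _ ≤ 2 / b + 2 / b := add_le_add hg2 h3
        _ = 4 / b := by ring
    have e1 : g1 ^ 2 ≤ (2 / b) ^ 2 := by rw [← sq_abs]; gcongr
    have e2 : (g2 + A * g1 * s) ^ 2 ≤ (4 / b) ^ 2 := by rw [← sq_abs]; gcongr
    have e3 : g3 ^ 2 ≤ (2 / b) ^ 2 := by rw [← sq_abs]; gcongr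
    calc _ ≤ ((2 / b) ^ 2 + (4 / b) ^ 2 + (2 / b) ^ 2) ^ 2 * t := by gcongr
      _ = 576 := by rw [← hb4]; field_simp; norm_num
  obtain ⟨θ, hθd⟩ : ∃ θ, θ = 2 - 1 / (8 * (κ - ε)) := ⟨_, rfl⟩
  have hint : (Phi A κ t (cpt (ξ, η, ζ) (g1, g2, g3))).re ≤
      ∫ s in (0:ℝ)..t, (-ε + 82944 / (θ * t) - θ * (ξ ^ 4 + (η + A * ξ * s) ^ 4 + ζ ^ 4)) := by
    rw [Phi_eq_integral, ← Complex.reCLM_apply, ← ContinuousLinearMap.intervalIntegral_comp_comm]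
    · refine intervalIntegral.integral_mono_on ht.le ?_ ?_ ?_
      · exact (by fun_prop : Continuous _).intervalIntegrable _ _
      · exact (by fun_prop : Continuous _).intervalIntegrable _ _
      · intro s hs
        have := re_symbol_le hκ ht ξ (η + A * ξ * s) ζ g1 (g2 + A * g1 * s) g3 (hgs s hs)
        rw [← hθd] at this
        refine le_trans (le_of_eq ?_) this
        rw [Complex.reCLM_apply]
        congr 1
        simp only [cpt]
        push_cast
        ring
    · exact (by fun_prop : Continuous _).intervalIntegrable _ _
  rw [← hθd] at hθ ⊢
  refine hint.trans ?_
  have hsplit : ∫ s in (0:ℝ)..t,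
      (-ε + 82944 / (θ * t) - θ * (ξ ^ 4 + (η + A * ξ * s) ^ 4 + ζ ^ 4)) =
      (-ε + 82944 / (θ * t) - θ * (ξ ^ 4 + ζ ^ 4)) * t -
        θ * ∫ s in (0:ℝ)..t, (η + A * ξ * s) ^ 4 := by
    have : ∀ s : ℝ, (-ε + 82944 / (θ * t) - θ * (ξ ^ 4 + (η + A * ξ * s) ^ 4 + ζ ^ 4)) =
      (-ε + 82944 / (θ * t) - θ * (ξ ^ 4 + ζ ^ 4)) - θ * (η + A * ξ * s) ^ 4 := fun s => by ring
    simp_rw [this]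
    rw [intervalIntegral.integral_sub, intervalIntegral.integral_const,
      intervalIntegral.integral_const_mul, smul_eq_mul]
    · ring
    · exact (by fun_prop : Continuous _).intervalIntegrable _ _
    · exact (by fun_prop : Continuous _).intervalIntegrable _ _
  rw [hsplit, integral_shear_pow_four, mul_pow a, mul_pow b, mul_pow b, ha4, hb4]
  have hq := mul_le_mul_of_nonneg_left (quartic_lower η (A * ξ * t)) (mul_pos hθ ht).le
  have e1 : (-ε + 82944 / (θ * t) - θ * (ξ ^ 4 + ζ ^ 4)) * t =
      -ε * t + 82944 / θ - θ * t * (ξ ^ 4 + ζ ^ 4) := by field_simp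
  rw [e1]
  have hx : 0 ≤ θ * t * (ξ ^ 4 + ζ ^ 4) := by positivity
  have e2 : t * (1 + (A * t) ^ 4) * ξ ^ 4 = t * ξ ^ 4 + t * (A * ξ * t) ^ 4 := by ring
  rw [e2]
  linarith

/-- Polynomial factors are absorbed by the quartic exponential, leaving an integrable weight. -/
theorem exists_pow_mul_exp_le (k : ℕ) {c : ℝ} (hc : 0 < c) :
    ∃ K : ℝ, 0 < K ∧ ∀ u : ℝ, (|u| + 2) ^ k * Real.exp (-c * u ^ 4) ≤ K * (1 + u ^ 2)⁻¹ := by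
  refine ⟨(k + 2).factorial * Real.exp (3 + 1 / (4 * c)), by positivity, fun u => ?_⟩
  have h1 := Real.pow_div_factorial_le_exp (|u| + 2) (by positivity) (k + 2)
  rw [div_le_iff₀ (by positivity)] at h1
  have h2 : |u| + 2 ≤ (3 + 1 / (4 * c)) + c * u ^ 4 := by
    have e : 0 ≤ (2 * c * u ^ 2 - 1) ^ 2 / (4 * c) := by positivity
    have e2 : (2 * c * u ^ 2 - 1) ^ 2 / (4 * c) = c * u ^ 4 - u ^ 2 + 1 / (4 * c) := by
      field_simp; ring
    nlinarith [sq_abs u, sq_nonneg (|u| - 1)]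
  have h3 : 1 + u ^ 2 ≤ (|u| + 2) ^ 2 := by nlinarith [sq_abs u, abs_nonneg u]
  rw [← div_eq_mul_inv, le_div_iff₀ (by positivity)]
  calc (|u| + 2) ^ k * Real.exp (-c * u ^ 4) * (1 + u ^ 2)
      ≤ (|u| + 2) ^ k * Real.exp (-c * u ^ 4) * (|u| + 2) ^ 2 := by gcongr
    _ = (|u| + 2) ^ (k + 2) * Real.exp (-c * u ^ 4) := by ring
    _ ≤ (Real.exp (|u| + 2) * (k + 2).factorial) * Real.exp (-c * u ^ 4) := by gcongr
    _ ≤ (Real.exp ((3 + 1 / (4 * c)) + c * u ^ 4) * (k + 2).factorial) *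
        Real.exp (-c * u ^ 4) := by gcongr
    _ = _ := by
      rw [Real.exp_add, neg_mul, Real.exp_neg]; field_simp

/-- The Fourier multiplier of `∂_x^{k₁} ∂_y^{k₂} ∂_z^{k₃}` applied to the kernel, extended to
complex frequencies. -/
noncomputable def mult (A κ t : ℝ) (k₁ k₂ k₃ : ℕ) (Z : ℂ × ℂ × ℂ) : ℂ :=
  (Complex.I * Z.1) ^ k₁ * (Complex.I * Z.2.1) ^ k₂ * (Complex.I * Z.2.2) ^ k₃ *
    Complex.exp (Phi A κ t Z)

theorem contDiff_mult (A κ t : ℝ) (k₁ k₂ k₃ : ℕ) : ContDiff ℂ 1 (mult A κ t k₁ k₂ k₃) := by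
  unfold mult Phi
  fun_prop

/-- Uniform domination of the multiplier on the tube of widths `2/a, 2/b, 2/b`, where
`a = (t (1 + (A t)⁴))^{1/4}` and `b = t^{1/4}`. The constant does not depend on `t`. -/
theorem exists_mult_bound {A κ ε : ℝ} (hA : 0 < A) (hκ : 1 / 16 + ε < κ)
    (k₁ k₂ k₃ : ℕ) : ∃ C : ℝ, 0 < C ∧ ∀ t a b : ℝ, 0 < t → 0 < a → 0 < b →
      a ^ 4 = t * (1 + (A * t) ^ 4) → b ^ 4 = t → ∀ q g : ℝ × ℝ × ℝ,
      |g.1| ≤ 2 / a → |g.2.1| ≤ 2 / b → |g.2.2| ≤ 2 / b →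
      ‖mult A κ t k₁ k₂ k₃ (cpt q g)‖ ≤
        (C * Real.exp (-ε * t) * ((a⁻¹) ^ k₁ * (b⁻¹) ^ k₂ * (b⁻¹) ^ k₃)) * cauchyW a b b q := by
  obtain ⟨θ, hθd⟩ : ∃ θ, θ = 2 - 1 / (8 * (κ - ε)) := ⟨_, rfl⟩
  have hθ : 0 < θ := by
    have : 0 < κ - ε := by linarith
    rw [hθd, sub_pos, div_lt_iff₀ (by positivity)]; linarith
  obtain ⟨K1, hK1, H1⟩ := exists_pow_mul_exp_le k₁ (c := θ / 200) (by positivity)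
  obtain ⟨K2, hK2, H2⟩ := exists_pow_mul_exp_le k₂ (c := θ / 200) (by positivity)
  obtain ⟨K3, hK3, H3⟩ := exists_pow_mul_exp_le k₃ (c := θ / 200) (by positivity)
  refine ⟨Real.exp (82944 / θ) * (K1 * K2 * K3), by positivity, ?_⟩
  intro t a b ht ha hb ha4 hb4 q g hg1 hg2 hg3
  have hre := re_Phi_le hA hκ ht ha hb ha4 hb4 q g hg1 hg2 hg3
  rw [← hθd] at hre
  have hn : ∀ d : ℝ, 0 < d → ∀ x y : ℝ, |y| ≤ 2 / d →
      ‖Complex.I * ((x : ℂ) + y * Complex.I)‖ ≤ d⁻¹ * (|d * x| + 2) := by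
    intro d hd x y hy
    calc ‖Complex.I * ((x : ℂ) + y * Complex.I)‖ ≤ |x| + |y| := by
          rw [norm_mul, Complex.norm_I, one_mul]
          refine (norm_add_le _ _).trans_eq ?_
          simp
      _ ≤ |x| + 2 / d := by gcongr
      _ = d⁻¹ * (|d * x| + 2) := by
          rw [abs_mul, abs_of_pos hd]; field_simp
  have hmul : ‖mult A κ t k₁ k₂ k₃ (cpt q g)‖ ≤
      (a⁻¹ * (|a * q.1| + 2)) ^ k₁ * (b⁻¹ * (|b * q.2.1| + 2)) ^ k₂ *
        (b⁻¹ * (|b * q.2.2| + 2)) ^ k₃ * Real.exp (-ε * t + 82944 / θ -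
      θ / 200 * ((a * q.1) ^ 4 + (b * q.2.1) ^ 4 + (b * q.2.2) ^ 4)) := by
    unfold mult
    rw [norm_mul, norm_mul, norm_mul, norm_pow, norm_pow, norm_pow, Complex.norm_exp]
    gcongr
    · exact hn a ha _ _ hg1
    · exact hn b hb _ _ hg2
    · exact hn b hb _ _ hg3
  refine hmul.trans ?_
  have hexp : Real.exp (-ε * t + 82944 / θ -
      θ / 200 * ((a * q.1) ^ 4 + (b * q.2.1) ^ 4 + (b * q.2.2) ^ 4)) =
      Real.exp (82944 / θ) * Real.exp (-ε * t) * (Real.exp (-(θ / 200) * (a * q.1) ^ 4) *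
        Real.exp (-(θ / 200) * (b * q.2.1) ^ 4) * Real.exp (-(θ / 200) * (b * q.2.2) ^ 4)) := by
    rw [← Real.exp_add, ← Real.exp_add, ← Real.exp_add, ← Real.exp_add]
    congr 1; ring
  rw [hexp]
  calc _ = Real.exp (82944 / θ) * Real.exp (-ε * t) * ((a⁻¹) ^ k₁ * (b⁻¹) ^ k₂ * (b⁻¹) ^ k₃) *
        (((|a * q.1| + 2) ^ k₁ * Real.exp (-(θ / 200) * (a * q.1) ^ 4)) *
         ((|b * q.2.1| + 2) ^ k₂ * Real.exp (-(θ / 200) * (b * q.2.1) ^ 4)) *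
         ((|b * q.2.2| + 2) ^ k₃ * Real.exp (-(θ / 200) * (b * q.2.2) ^ 4))) := by
        rw [mul_pow, mul_pow, mul_pow]; ring
    _ ≤ Real.exp (82944 / θ) * Real.exp (-ε * t) * ((a⁻¹) ^ k₁ * (b⁻¹) ^ k₂ * (b⁻¹) ^ k₃) *
        ((K1 * (1 + (a * q.1) ^ 2)⁻¹) * (K2 * (1 + (b * q.2.1) ^ 2)⁻¹) *
          (K3 * (1 + (b * q.2.2) ^ 2)⁻¹)) := by
        have m1 := H1 (a * q.1)
        have m2 := H2 (b * q.2.1)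
        have m3 := H3 (b * q.2.2)
        have m12 := mul_le_mul m1 m2 (by positivity) (by positivity)
        exact mul_le_mul_of_nonneg_left (mul_le_mul m12 m3 (by positivity) (by positivity))
          (by positivity)
    _ = _ := by unfold cauchyW; ring

/-! ### Derivatives of the kernel -/

/-- The Fourier integral of the multiplier `mult A κ t k₁ k₂ k₃`; it equals
`∂_x^{k₁} ∂_y^{k₂} ∂_z^{k₃} G₂`. -/
noncomputable def kernelD (A κ t : ℝ) (k₁ k₂ k₃ : ℕ) (X : ℝ × ℝ × ℝ) : ℂ :=
  ∫ q : ℝ × ℝ × ℝ, Complex.exp (Complex.I *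
    ((X.1 * q.1 + X.2.1 * q.2.1 + X.2.2 * q.2.2 : ℝ) : ℂ)) * mult A κ t k₁ k₂ k₃ (cpt q 0)

/-- The length scales of the kernel: `a` in the `x` direction, `b` in the `y` and `z` directions. -/
theorem exists_scales (A : ℝ) {t : ℝ} (ht : 0 < t) : ∃ a b : ℝ, 0 < a ∧ 0 < b ∧
    a ^ 4 = t * (1 + (A * t) ^ 4) ∧ b ^ 4 = t ∧
    a = t ^ (1 / 4 : ℝ) * (1 + (A * t) ^ 4) ^ (1 / 4 : ℝ) ∧ b = t ^ (1 / 4 : ℝ) := by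
  have hB : 0 < 1 + (A * t) ^ 4 := by positivity
  have e : ∀ x : ℝ, 0 < x → (x ^ (1 / 4 : ℝ)) ^ 4 = x := fun x hx => by
    rw [← Real.rpow_natCast, ← Real.rpow_mul hx.le]; norm_num
  refine ⟨_, _, ?_, ?_, ?_, ?_, rfl, rfl⟩
  · positivity
  · positivity
  · rw [mul_pow, e _ ht, e _ hB]
  · exact e _ ht

theorem continuous_mult_cpt (A κ t : ℝ) (k₁ k₂ k₃ : ℕ) :
    Continuous fun q => mult A κ t k₁ k₂ k₃ (cpt q 0) :=
  (contDiff_mult A κ t k₁ k₂ k₃).continuous.comp (continuous_cpt 0)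

theorem integrable_mult {A κ ε t : ℝ} (hA : 0 < A) (hκ : 1 / 16 + ε < κ) (ht : 0 < t)
    (k₁ k₂ k₃ : ℕ) : Integrable fun q => mult A κ t k₁ k₂ k₃ (cpt q 0) := by
  obtain ⟨C, -, hC⟩ := exists_mult_bound hA hκ k₁ k₂ k₃
  obtain ⟨a, b, ha, hb, ha4, hb4, -, -⟩ := exists_scales A ht
  refine ((integrable_cauchyW ha hb hb).const_mul _).mono'
    (continuous_mult_cpt A κ t k₁ k₂ k₃).aestronglyMeasurable
    (Filter.Eventually.of_forall fun q => hC t a b ht ha hb ha4 hb4 q 0 ?_ ?_ ?_) <;>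
  · simp; positivity

/-- Differentiation of a Fourier integral in one coordinate `u`; the phase `L u q` has `u`-derivative
`l q`. -/
theorem hasDerivAt_integral_exp_I_mul (L : ℝ → ℝ × ℝ × ℝ → ℝ) (l : ℝ × ℝ × ℝ → ℝ)
    (hL : ∀ q u, HasDerivAt (fun u => L u q) (l q) u) (hLc : ∀ u, Continuous (L u))
    (m m' : ℝ × ℝ × ℝ → ℂ) (hm : Integrable m) (hm' : Integrable m')
    (hmm : ∀ q, m' q = Complex.I * l q * m q) (u : ℝ) :
    HasDerivAt (fun u => ∫ q, Complex.exp (Complex.I * (L u q : ℂ)) * m q)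
      (∫ q, Complex.exp (Complex.I * (L u q : ℂ)) * m' q) u := by
  have hn : ∀ (u : ℝ) (q : ℝ × ℝ × ℝ), ‖Complex.exp (Complex.I * (L u q : ℂ))‖ = 1 := fun u q => by
    rw [mul_comm]; exact Complex.norm_exp_ofReal_mul_I _
  have hec : ∀ u, Continuous fun q => Complex.exp (Complex.I * (L u q : ℂ)) := fun u => by
    have := hLc u
    fun_prop
  refine (hasDerivAt_integral_of_dominated_loc_of_deriv_le (bound := fun q => ‖m' q‖)
    (F' := fun u q => Complex.exp (Complex.I * (L u q : ℂ)) * m' q) Filter.univ_mem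
    (Filter.Eventually.of_forall fun u => (hec u).aestronglyMeasurable.mul hm.1) ?_
    ((hec u).aestronglyMeasurable.mul hm'.1) ?_ hm'.norm ?_).2
  · refine hm.norm.mono' ((hec u).aestronglyMeasurable.mul hm.1)
      (Filter.Eventually.of_forall fun q => ?_)
    rw [Pi.mul_apply, norm_mul, hn, one_mul]
  · refine Filter.Eventually.of_forall fun q u _ => ?_
    rw [norm_mul, hn, one_mul]
  · refine Filter.Eventually.of_forall fun q u _ => ?_
    refine ((((hL q u).ofReal_comp.const_mul Complex.I).cexp).mul_const (m q)).congr_deriv ?_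
    rw [hmm]; ring

section Derivatives

variable {A κ ε t : ℝ}

theorem pdx_kernelD (hA : 0 < A) (hκ : 1 / 16 + ε < κ) (ht : 0 < t) (k₁ k₂ k₃ : ℕ) :
    pdx (kernelD A κ t k₁ k₂ k₃) = kernelD A κ t (k₁ + 1) k₂ k₃ := by
  funext X
  refine (hasDerivAt_integral_exp_I_mul (fun u q => u * q.1 + X.2.1 * q.2.1 + X.2.2 * q.2.2) (fun q => q.1)
    (fun q u => ?_) (fun u => by fun_prop) _ _ (integrable_mult hA hκ ht k₁ k₂ k₃)
    (integrable_mult hA hκ ht (k₁ + 1) k₂ k₃) (fun q => ?_) X.1).deriv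
  · simpa using (((hasDerivAt_id u).mul_const q.1).add_const (X.2.1 * q.2.1)).add_const
      (X.2.2 * q.2.2)
  · simp [mult, cpt]; ring

theorem pdy_kernelD (hA : 0 < A) (hκ : 1 / 16 + ε < κ) (ht : 0 < t) (k₁ k₂ k₃ : ℕ) :
    pdy (kernelD A κ t k₁ k₂ k₃) = kernelD A κ t k₁ (k₂ + 1) k₃ := by
  funext X
  refine (hasDerivAt_integral_exp_I_mul (fun u q => X.1 * q.1 + u * q.2.1 + X.2.2 * q.2.2) (fun q => q.2.1)
    (fun q u => ?_) (fun u => by fun_prop) _ _ (integrable_mult hA hκ ht k₁ k₂ k₃)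
    (integrable_mult hA hκ ht k₁ (k₂ + 1) k₃) (fun q => ?_) X.2.1).deriv
  · simpa using (((hasDerivAt_id u).mul_const q.2.1).const_add (X.1 * q.1)).add_const
      (X.2.2 * q.2.2)
  · simp [mult, cpt]; ring

theorem pdz_kernelD (hA : 0 < A) (hκ : 1 / 16 + ε < κ) (ht : 0 < t) (k₁ k₂ k₃ : ℕ) :
    pdz (kernelD A κ t k₁ k₂ k₃) = kernelD A κ t k₁ k₂ (k₃ + 1) := by
  funext X
  refine (hasDerivAt_integral_exp_I_mul (fun u q => X.1 * q.1 + X.2.1 * q.2.1 + u * q.2.2) (fun q => q.2.2)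
    (fun q u => ?_) (fun u => by fun_prop) _ _ (integrable_mult hA hκ ht k₁ k₂ k₃)
    (integrable_mult hA hκ ht k₁ k₂ (k₃ + 1)) (fun q => ?_) X.2.2).deriv
  · simpa using ((hasDerivAt_id u).mul_const q.2.2).const_add (X.1 * q.1 + X.2.1 * q.2.1)
  · simp [mult, cpt]; ring

theorem pD_G2 (hA : 0 < A) (hκ : 1 / 16 + ε < κ) (ht : 0 < t) (k₁ k₂ k₃ : ℕ) :
    pD k₁ k₂ k₃ (fun q : ℝ × ℝ × ℝ => G2 A κ t q.1 q.2.1 q.2.2) = kernelD A κ t k₁ k₂ k₃ := by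
  have h0 : (fun q : ℝ × ℝ × ℝ => G2 A κ t q.1 q.2.1 q.2.2) = kernelD A κ t 0 0 0 := by
    funext X
    simp only [G2, kernelD, Ghat2_eq_s12, mult, pow_zero, one_mul]
  have hz : ∀ n, pdz^[n] (kernelD A κ t 0 0 0) = kernelD A κ t 0 0 n := fun n => by
    induction n with
    | zero => rfl
    | succ n ih => rw [Function.iterate_succ_apply', ih, pdz_kernelD hA hκ ht]
  have hy : ∀ n, pdy^[n] (kernelD A κ t 0 0 k₃) = kernelD A κ t 0 n k₃ := fun n => by
    induction n with
    | zero => rfl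
    | succ n ih => rw [Function.iterate_succ_apply', ih, pdy_kernelD hA hκ ht]
  have hx : ∀ n, pdx^[n] (kernelD A κ t 0 k₂ k₃) = kernelD A κ t n k₂ k₃ := fun n => by
    induction n with
    | zero => rfl
    | succ n ih => rw [Function.iterate_succ_apply', ih, pdx_kernelD hA hκ ht]
  rw [h0, pD, hz, hy, hx]

end Derivatives

/-! ### The `L^p` norm -/

theorem integral_exp_neg_abs_div {d : ℝ} (hd : 0 < d) :
    ∫ x : ℝ, Real.exp (-(|x| / d)) = 2 * d := by
  rw [integral_comp_abs (f := fun x => Real.exp (-(x / d)))]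
  have := integral_exp_mul_Ioi (a := -d⁻¹) (by simpa using hd) 0
  have e : ∀ x : ℝ, -(x / d) = -d⁻¹ * x := fun x => by field_simp
  simp_rw [e, this]
  simp

/-- The `L^p` norm of a function with exponential decay at scales `a, b, c`. As `p ≥ 1`, the
`p`-th power of the exponential is at most the exponential itself. -/
theorem eLpNorm_le_of_exp_decay {a b c N : ℝ} (ha : 0 < a) (hb : 0 < b) (hc : 0 < c) (hN : 0 ≤ N)
    {p : ℝ≥0∞} (hp1 : 1 ≤ p) (hp : p ≠ ⊤) (f : ℝ × ℝ × ℝ → ℂ)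
    (hf : ∀ X, ‖f X‖ ≤ N * Real.exp (-(|X.1| / a) - |X.2.1| / b - |X.2.2| / c)) :
    eLpNorm f p volume ≤ ENNReal.ofReal (N * (8 * (a * b * c)) ^ p⁻¹.toReal) := by
  have hp0 : p ≠ 0 := (zero_lt_one.trans_le hp1).ne'
  have hP1 : 1 ≤ p.toReal := by
    simpa using (ENNReal.toReal_le_toReal ENNReal.one_ne_top hp).2 hp1
  let h : ℝ × ℝ × ℝ → ℝ := fun X =>
    Real.exp (-(|X.1| / a)) * (Real.exp (-(|X.2.1| / b)) * Real.exp (-(|X.2.2| / c)))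
  have hi : ∀ d : ℝ, 0 < d → Integrable fun x : ℝ => Real.exp (-(|x| / d)) := fun d hd => by
    by_contra hcon
    have h1 := integral_undef hcon
    rw [integral_exp_neg_abs_div hd] at h1
    linarith
  have hhi : Integrable h := (hi a ha).mul_prod ((hi b hb).mul_prod (hi c hc))
  have hhint : ∫ X, h X = 8 * (a * b * c) := by
    simp only [h]
    rw [Measure.volume_eq_prod, integral_prod_mul (fun x : ℝ => Real.exp (-(|x| / a)))
      (fun y : ℝ × ℝ => Real.exp (-(|y.1| / b)) * Real.exp (-(|y.2| / c))),
      Measure.volume_eq_prod, integral_prod_mul (fun x : ℝ => Real.exp (-(|x| / b)))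
      (fun x : ℝ => Real.exp (-(|x| / c))), integral_exp_neg_abs_div ha,
      integral_exp_neg_abs_div hb, integral_exp_neg_abs_div hc]
    ring
  rw [eLpNorm_eq_lintegral_rpow_enorm_toReal hp0 hp]
  have hpt : ∀ X, ‖f X‖ₑ ^ p.toReal ≤ ENNReal.ofReal (N ^ p.toReal * h X) := by
    intro X
    rw [← ofReal_norm, ENNReal.ofReal_rpow_of_nonneg (norm_nonneg _) (by linarith)]
    refine ENNReal.ofReal_le_ofReal ?_
    have hh : h X = Real.exp (-(|X.1| / a) - |X.2.1| / b - |X.2.2| / c) := by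
      simp only [h]; rw [← Real.exp_add, ← Real.exp_add]; congr 1; ring
    calc ‖f X‖ ^ p.toReal
        ≤ (N * Real.exp (-(|X.1| / a) - |X.2.1| / b - |X.2.2| / c)) ^ p.toReal :=
          Real.rpow_le_rpow (norm_nonneg _) (hf X) (by linarith)
      _ ≤ N ^ p.toReal * h X := by
          rw [hh, Real.mul_rpow hN (Real.exp_pos _).le]
          refine mul_le_mul_of_nonneg_left ?_ (Real.rpow_nonneg hN _)
          refine (Real.rpow_le_rpow_of_exponent_ge (Real.exp_pos _) ?_ hP1).trans_eq
            (Real.rpow_one _)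
          rw [Real.exp_le_one_iff]
          have h1 : 0 ≤ |X.1| / a := by positivity
          have h2 : 0 ≤ |X.2.1| / b := by positivity
          have h3 : 0 ≤ |X.2.2| / c := by positivity
          linarith
  calc (∫⁻ X, ‖f X‖ₑ ^ p.toReal) ^ (1 / p.toReal)
      ≤ (∫⁻ X, ENNReal.ofReal (N ^ p.toReal * h X)) ^ (1 / p.toReal) :=
        ENNReal.rpow_le_rpow (lintegral_mono hpt) (by positivity)
    _ = (ENNReal.ofReal (N ^ p.toReal * (8 * (a * b * c)))) ^ (1 / p.toReal) := by
        rw [← ofReal_integral_eq_lintegral_ofReal (hhi.const_mul _)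
          (Filter.Eventually.of_forall fun X => by
            have := Real.rpow_nonneg hN p.toReal
            simp only [h, Pi.zero_apply]; positivity), integral_const_mul, hhint]
    _ = _ := by
        have := Real.rpow_nonneg hN p.toReal
        rw [ENNReal.ofReal_rpow_of_nonneg (by positivity) (by positivity),
          Real.mul_rpow this (by positivity), one_div, Real.rpow_rpow_inv hN (by linarith),
          ENNReal.toReal_inv]

/-- Bookkeeping of the powers of `t` and `B = 1 + (A t)⁴`, with `P = 1/p`. -/
theorem scale_identity {t B a b P : ℝ} (ht : 0 < t) (hB : 0 < B)
    (ha : a = t ^ (1 / 4 : ℝ) * B ^ (1 / 4 : ℝ)) (hb : b = t ^ (1 / 4 : ℝ)) (k₁ k₂ k₃ : ℕ) :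
    ((a⁻¹) ^ k₁ * (b⁻¹) ^ k₂ * (b⁻¹) ^ k₃) * (1 / (a * b * b)) * (a * b * b) ^ P =
      t ^ (-(3:ℝ)/4 * (1 - P) - (k₁ + k₂ + k₃ : ℝ)/4) *
        B ^ (-(1:ℝ)/4 * (1 - P) - (k₁ : ℝ)/4) := by
  have e1 : ∀ (x : ℝ) (n : ℕ), 0 < x → ((x ^ (1 / 4 : ℝ))⁻¹) ^ n = x ^ (-(n : ℝ) / 4) := by
    intro x n hx
    rw [← Real.rpow_neg hx.le, ← Real.rpow_natCast, ← Real.rpow_mul hx.le]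
    congr 1; ring
  have e2 : a * b * b = t ^ (3 / 4 : ℝ) * B ^ (1 / 4 : ℝ) := by
    have : t ^ (3 / 4 : ℝ) = t ^ (1 / 4 : ℝ) * t ^ (1 / 4 : ℝ) * t ^ (1 / 4 : ℝ) := by
      rw [← Real.rpow_add ht, ← Real.rpow_add ht]; norm_num
    rw [ha, hb, this]; ring
  have e3 : 1 / (a * b * b) * (a * b * b) ^ P =
      t ^ (3 / 4 * (P - 1)) * B ^ (1 / 4 * (P - 1)) := by
    have hpos : 0 < a * b * b := by rw [e2]; positivity
    rw [mul_comm, mul_one_div, ← Real.rpow_sub_one hpos.ne', e2,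
      Real.mul_rpow (by positivity) (by positivity), ← Real.rpow_mul ht.le, ← Real.rpow_mul hB.le]
  rw [mul_assoc, e3, ha, hb, mul_inv, mul_pow, e1 t _ ht, e1 t _ ht, e1 t _ ht, e1 B _ hB]
  have f1 : -(3:ℝ)/4 * (1 - P) - (k₁ + k₂ + k₃ : ℝ)/4 =
      -(k₁ : ℝ) / 4 + -(k₂ : ℝ) / 4 + -(k₃ : ℝ) / 4 + 3 / 4 * (P - 1) := by ring
  have f2 : -(1:ℝ)/4 * (1 - P) - (k₁ : ℝ)/4 = -(k₁ : ℝ) / 4 + 1 / 4 * (P - 1) := by ring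
  rw [f1, f2, Real.rpow_add ht, Real.rpow_add ht, Real.rpow_add ht, Real.rpow_add hB]
  ring

/-- Let `1 ≤ p < 2` and `k = k₁ + k₂ + k₃ ≤ 6`. There is `C > 0` such that
for all `t > 0`:
`‖∂_x^{k₁}∂_y^{k₂}∂_z^{k₃} G₂(t,·,·,·)‖_{L^p(ℝ³)} ≤
  C e^{-εt} t^{-(3/4)(1-1/p) - k/4} (1+(At)⁴)^{-(1/4)(1-1/p) - k₁/4}`. -/
theorem stmt_12 (A κ ε : ℝ) (hA : 0 < A) (hκ0 : 0 < κ) (hε : 0 < ε)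
    (hκ : 1 / 16 + ε < κ) (k₁ k₂ k₃ : ℕ) (hk : k₁ + k₂ + k₃ ≤ 6)
    (p : ℝ≥0∞) (hp1 : 1 ≤ p) (hp2 : p < 2) :
    ∃ C : ℝ, 0 < C ∧ ∀ t : ℝ, 0 < t →
      eLpNorm (pD k₁ k₂ k₃ (fun q : ℝ × ℝ × ℝ => G2 A κ t q.1 q.2.1 q.2.2)) p volume ≤
        ENNReal.ofReal (C * Real.exp (-ε * t) *
          t ^ (-(3:ℝ)/4 * (1 - p⁻¹.toReal) - (k₁ + k₂ + k₃ : ℝ)/4) *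
          (1 + (A * t) ^ 4) ^ (-(1:ℝ)/4 * (1 - p⁻¹.toReal) - (k₁ : ℝ)/4)) := by
  obtain ⟨C, hC, hbd⟩ := exists_mult_bound hA hκ k₁ k₂ k₃
  refine ⟨C * Real.pi ^ 3 * 8 ^ p⁻¹.toReal, by positivity, fun t ht => ?_⟩
  obtain ⟨a, b, ha, hb, ha4, hb4, hae, hbe⟩ := exists_scales A ht
  have hB : 0 < 1 + (A * t) ^ 4 := by positivity
  rw [pD_G2 hA hκ ht]
  have hdec : ∀ X, ‖kernelD A κ t k₁ k₂ k₃ X‖ ≤ _ := fun X =>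
    fourier_exp_decay ha hb hb _ (contDiff_mult A κ t k₁ k₂ k₃)
      (fun q g => hbd t a b ht ha hb ha4 hb4 q g) X
  refine (eLpNorm_le_of_exp_decay ha hb hb (by positivity) hp1
    (hp2.trans ENNReal.ofNat_lt_top).ne _ hdec).trans_eq ?_
  congr 1
  rw [mul_assoc (C * Real.pi ^ 3 * 8 ^ p⁻¹.toReal * Real.exp (-ε * t)),
    ← scale_identity ht hB hae hbe k₁ k₂ k₃, Real.mul_rpow (by norm_num) (by positivity)]
  ring
end
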